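/- A projection p in a von Neumann algebra M is properly infinite if and only if p ≈ λp for some (equivalently, every) λ ∈ (0,1) ∪ (1,∞). -/

import Mathlib

/-!
Let `p` be properly infinite, `p = ∑ eₙ` with partial isometries `vₙ ∈ M` such that `vₙ* vₙ = eₙ`
and `vₙ vₙ* = p`. For `c > 0` take a nonnegative matrix `a` with row sums `1` and column sums `c`;
the elements `x = √aₙₘ vₘ* vₙ` satisfy `x* x = aₙₘ eₙ` and `x x* = aₙₘ eₘ`, so they witness
`p ≈ c p`.

Conversely let `p ≈ c p` with `c ≠ 1`. It suffices that every nonzero central cut of `p` contains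
infinitely many orthogonal copies of some nonzero projection. A maximal family of such copies then
splits a smaller central cut into infinitely many equivalent pieces and a remainder dominated by one
of them, so this cut contains two orthogonal copies of itself. Such cuts add up to `p`, and a
projection containing two orthogonal copies of itself is properly infinite.

So suppose that a nonzero central cut `q` admits only finite families of copies. Let `R ≤ q` be the
support of a nonzero vector `ξ` of `q`. By finiteness a maximal orthogonal family of partial
isometries `v ∈ R M R` with `2 ‖v* ξ‖ ≤ ‖v ξ‖` cannot add up to a unitary of `R M R`. What it leaves
over yields a nonzero projection `e ≤ R` and a vector `η` with `‖y ξ‖ ≤ ‖y* η‖` for all `y ∈ e M e`;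
this plays the part of a trace. Splitting a central cut `q'` of `q` into finitely many copies of `e`
and a remainder spreads it to `∑ ‖y ξⱼ‖² ≤ ∑ ‖y* ηⱼ‖²` for all `y ∈ q' M q'`. Summing over the
elements that witness `q' ≈ cⁿ q'`, where `c < 1` without loss of generality, gives
`∑ ‖q' ξⱼ‖² ≤ cⁿ ∑ ‖q' ηⱼ‖² → 0`, although the left-hand side is not zero.
-/

open ContinuousLinearMap Filter Topology

universe u

noncomputable section

variable {H : Type u} [NormedAddCommGroup H] [InnerProductSpace ℂ H] [CompleteSpace H]

/-- `p` is an (orthogonal) projection belonging to the von Neumann algebra `M`. -/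
def IsProjIn (M : VonNeumannAlgebra H) (p : H →L[ℂ] H) : Prop :=
  p ∈ M ∧ IsSelfAdjoint p ∧ p * p = p

/-- Murray–von Neumann equivalence of `p` and `q` relative to `M`:
there is a partial isometry `v ∈ M` with `v* v = p` and `v v* = q`. -/
def MvNEquiv (M : VonNeumannAlgebra H) (p q : H →L[ℂ] H) : Prop :=
  ∃ v ∈ M, adjoint v * v = p ∧ v * adjoint v = q

/-- The order on projections: `p ≤ q` iff `p q = p = q p`. -/
def ProjLE (p q : H →L[ℂ] H) : Prop := p * q = p ∧ q * p = p

/-- Murray–von Neumann subequivalence `p ≼ q`: `p` is equivalent to a subprojection of `q`. -/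
def SubEquiv (M : VonNeumannAlgebra H) (p q : H →L[ℂ] H) : Prop :=
  ∃ r, IsProjIn M r ∧ MvNEquiv M p r ∧ ProjLE r q

/-- `z` is a central projection of `M`. -/
def IsCentralProj (M : VonNeumannAlgebra H) (z : H →L[ℂ] H) : Prop :=
  IsProjIn M z ∧ ∀ x ∈ M, z * x = x * z

/-- A projection `p` is finite: `p ∼ q ≤ p` implies `q = p`. -/
def FiniteProj (M : VonNeumannAlgebra H) (p : H →L[ℂ] H) : Prop :=
  ∀ q, IsProjIn M q → ProjLE q p → MvNEquiv M p q → q = p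

/-- A projection `p` is properly infinite: it is a countably infinite sum of pairwise
orthogonal projections, each equivalent to `p`. -/
def ProperlyInfiniteProj (M : VonNeumannAlgebra H) (p : H →L[ℂ] H) : Prop :=
  p ≠ 0 ∧ ∃ e : ℕ → H →L[ℂ] H, (∀ n, IsProjIn M (e n)) ∧
    (Pairwise fun m n => e m * e n = 0) ∧ (∀ n, MvNEquiv M (e n) p) ∧
    ∀ ξ : H, HasSum (fun n => e n ξ) (p ξ)

/-- `z` is the central support of `h`: the smallest central projection with `z h = h`. -/
def IsCentralSupport (M : VonNeumannAlgebra H) (h z : H →L[ℂ] H) : Prop :=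
  IsCentralProj M z ∧ z * h = h ∧ ∀ w, IsCentralProj M w → w * h = h → z * w = z

/-- The projection `e` is σ-finite relative to `M`: every family of pairwise orthogonal
nonzero subprojections of `e` in `M` is countable. -/
def SigmaFiniteProj (M : VonNeumannAlgebra H) (e : H →L[ℂ] H) : Prop :=
  ∀ S : Set (H →L[ℂ] H), (∀ q ∈ S, IsProjIn M q ∧ q ≠ 0 ∧ ProjLE q e) →
    (S.Pairwise fun a b => a * b = 0) → S.Countable

/-- Kadison–Pedersen equivalence on the positive cone: `h ≈ k` iff there is a family
`{x_α} ⊆ M` with `h = Σ x_α* x_α` and `k = Σ x_α x_α*` (sums in the strong topology). -/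
def KPEquiv (M : VonNeumannAlgebra H) (h k : H →L[ℂ] H) : Prop :=
  ∃ (ι : Type u) (x : ι → H →L[ℂ] H), (∀ i, x i ∈ M) ∧
    (∀ ξ : H, HasSum (fun i => (adjoint (x i) * x i) ξ) (h ξ)) ∧
    (∀ ξ : H, HasSum (fun i => (x i * adjoint (x i)) ξ) (k ξ))

/-- Operator order: `a ≤ b` iff `b - a` is positive. -/
def OpLE (a b : H →L[ℂ] H) : Prop := (b - a).IsPositive

/-- `h ∈ M₊` is finite in the Kadison–Pedersen sense: `h ≈ k ≤ h` implies `k = h`. -/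
def KPFinite (M : VonNeumannAlgebra H) (h : H →L[ℂ] H) : Prop :=
  ∀ k, k ∈ M → k.IsPositive → OpLE k h → KPEquiv M h k → k = h

/-- `h ∈ M₊` is properly infinite: `z h` is finite and nonzero for no central projection `z`. -/
def KPProperlyInfinite (M : VonNeumannAlgebra H) (h : H →L[ℂ] H) : Prop :=
  h ≠ 0 ∧ ∀ z, IsCentralProj M z → KPFinite M (z * h) → z * h = 0

/-- The set of projections of `M`. -/
def ProjSet (M : VonNeumannAlgebra H) := {p : H →L[ℂ] H // IsProjIn M p}

/-- The strong operator topology on the projections of `M` (topology of pointwise convergence). -/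
instance (M : VonNeumannAlgebra H) : TopologicalSpace (ProjSet M) :=
  TopologicalSpace.induced (fun p : ProjSet M => (fun ξ => p.1 ξ : H → H)) inferInstance

/-- The quotient `P(M)/∼` of the projections of `M` by Murray–von Neumann equivalence,
carrying the quotient (strong operator) topology. -/
abbrev PQuot (M : VonNeumannAlgebra H) :=
  Quot (fun p q : ProjSet M => MvNEquiv M p.1 q.1)

/-- The quotient map `P(M) → P(M)/∼`. -/
def pquotMk (M : VonNeumannAlgebra H) : ProjSet M → PQuot M := Quot.mk _

/-- The strong operator topology on `B(H)`. -/
def SOT : TopologicalSpace (H →L[ℂ] H) :=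
  TopologicalSpace.induced (fun a : H →L[ℂ] H => (fun ξ => a ξ : H → H)) inferInstance

/-- The order induced on `P(M)/∼` by Murray–von Neumann subequivalence. -/
def QLE (M : VonNeumannAlgebra H) (a b : PQuot M) : Prop :=
  ∃ p q : ProjSet M, a = pquotMk M p ∧ b = pquotMk M q ∧ SubEquiv M p.1 q.1

section Basic

variable {M : VonNeumannAlgebra H}

theorem vonNeumannAlgebra_mem_iff {x : H →L[ℂ] H} :
    x ∈ M ↔ ∀ t ∈ M.commutant, ∀ ξ, t (x ξ) = x (t ξ) := by
  nth_rw 1 [← M.commutant_commutant]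
  rw [VonNeumannAlgebra.mem_commutant_iff]
  exact forall₂_congr fun t _ => ContinuousLinearMap.ext_iff

theorem smul_mem_vonNeumannAlgebra (c : ℂ) {x : H →L[ℂ] H} (hx : x ∈ M) : c • x ∈ M :=
  M.toStarSubalgebra.smul_mem hx c

theorem norm_sq_apply_eq_re_inner (x : H →L[ℂ] H) (ξ : H) :
    ‖x ξ‖ ^ 2 = RCLike.re (inner ℂ ((star x * x) ξ) ξ) :=
  apply_norm_sq_eq_inner_adjoint_left x ξ

theorem norm_apply_eq_of_star_mul_self_eq {a b : H →L[ℂ] H} (h : star a * a = star b * b) (ξ : H) :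
    ‖a ξ‖ = ‖b ξ‖ := by
  rw [← sq_eq_sq₀ (norm_nonneg _) (norm_nonneg _), norm_sq_apply_eq_re_inner, h,
    ← norm_sq_apply_eq_re_inner]

theorem eq_zero_of_star_mul_self_eq_zero {x : H →L[ℂ] H} (h : star x * x = 0) : x = 0 :=
  (CStarRing.star_mul_self_eq_zero_iff x).1 h

theorem IsProjIn.star_eq {p : H →L[ℂ] H} (hp : IsProjIn M p) : star p = p := hp.2.1.star_eq

theorem IsProjIn.mul_self {p : H →L[ℂ] H} (hp : IsProjIn M p) : p * p = p := hp.2.2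

theorem IsProjIn.isStarProjection {p : H →L[ℂ] H} (hp : IsProjIn M p) : IsStarProjection p :=
  ⟨hp.2.2, hp.2.1⟩

theorem IsProjIn.of_isStarProjection {p : H →L[ℂ] H} (hM : p ∈ M) (hp : IsStarProjection p) :
    IsProjIn M p :=
  ⟨hM, hp.isSelfAdjoint, hp.isIdempotentElem⟩

theorem IsProjIn.one_sub {p : H →L[ℂ] H} (hp : IsProjIn M p) : IsProjIn M (1 - p) :=
  .of_isStarProjection (sub_mem (one_mem M) hp.1) hp.isStarProjection.one_sub

theorem IsProjIn.sub {p q : H →L[ℂ] H} (hp : IsProjIn M p) (hq : IsProjIn M q)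
    (h : p * q = q) : IsProjIn M (p - q) :=
  .of_isStarProjection (sub_mem hp.1 hq.1)
    (hq.isStarProjection.sub_of_mul_eq_right hp.isStarProjection h)

theorem IsProjIn.mul_eq_right_comm {p q : H →L[ℂ] H} (hp : IsProjIn M p) (hq : IsProjIn M q) :
    p * q = q ↔ q * p = q := by
  constructor <;> intro h <;> simpa [hp.star_eq, hq.star_eq] using congrArg star h

theorem IsProjIn.norm_apply_le {p : H →L[ℂ] H} (hp : IsProjIn M p) (ξ : H) : ‖p ξ‖ ≤ ‖ξ‖ :=
  (p.le_of_opNorm_le hp.isStarProjection.norm_le ξ).trans_eq (one_mul _)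

theorem IsCentralProj.one_sub {z : H →L[ℂ] H} (hz : IsCentralProj M z) : IsCentralProj M (1 - z) :=
  ⟨hz.1.one_sub, fun x hx => by rw [sub_mul, mul_sub, one_mul, mul_one, hz.2 x hx]⟩

theorem IsCentralProj.isProjIn_mul {z p : H →L[ℂ] H} (hz : IsCentralProj M z) (hp : IsProjIn M p) :
    IsProjIn M (z * p) :=
  .of_isStarProjection (mul_mem hz.1.1 hp.1)
    (hz.1.isStarProjection.mul hp.isStarProjection (hz.2 p hp.1))

theorem IsCentralProj.mul {z w : H →L[ℂ] H} (hz : IsCentralProj M z) (hw : IsCentralProj M w) :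
    IsCentralProj M (z * w) :=
  ⟨hz.isProjIn_mul hw.1, fun x hx => by
    rw [mul_assoc, hw.2 x hx, ← mul_assoc, hz.2 x hx, mul_assoc]⟩

/-- The projection onto the closed linear span of a set of vectors. -/
def spanProjection (s : Set H) : H →L[ℂ] H := (Submodule.span ℂ s).topologicalClosure.starProjection

theorem spanProjection_apply_of_mem {s : Set H} {ξ : H} (h : ξ ∈ s) : spanProjection s ξ = ξ :=
  Submodule.starProjection_eq_self_iff.2
    (Submodule.le_topologicalClosure _ (Submodule.subset_span h))

theorem mul_spanProjection_eq_zero {s : Set H} {y : H →L[ℂ] H} (h : ∀ ξ ∈ s, y ξ = 0) :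
    y * spanProjection s = 0 := by
  have hker : (Submodule.span ℂ s).topologicalClosure ≤ LinearMap.ker (y : H →ₗ[ℂ] H) :=
    Submodule.topologicalClosure_minimal _ (Submodule.span_le.2 h) y.isClosed_ker
  ext ξ
  exact hker (Submodule.starProjection_apply_mem _ ξ)

theorem isProjIn_spanProjection {s : Set H} (h : ∀ t ∈ M.commutant, Set.MapsTo t s s) :
    IsProjIn M (spanProjection s) := by
  refine .of_isStarProjection ?_ isStarProjection_starProjection
  refine (VonNeumannAlgebra.IsStarProjection.mem_iff isStarProjection_starProjection M).2
    fun t ht => ?_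
  have hspan : ∀ ξ ∈ Submodule.span ℂ s, t ξ ∈ Submodule.span ℂ s := fun ξ hξ =>
    (Submodule.map_span_le (t : H →ₗ[ℂ] H) s _).2
      (fun η hη => Submodule.subset_span (h t ht hη)) (Submodule.mem_map_of_mem hξ)
  rw [Submodule.range_starProjection, Module.End.mem_invtSubmodule]
  exact fun ξ hξ => map_mem_closure t.continuous hξ hspan

theorem exists_isCentralProj_support {r : H →L[ℂ] H} (hr : r ∈ M) :
    ∃ z, IsCentralProj M z ∧ z * r = r ∧
      ∀ e : H →L[ℂ] H, (∀ x ∈ M, e * x * r = 0) → e * z = 0 := by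
  let s : Set H := {η | ∃ x ∈ M, ∃ ξ, x (r ξ) = η}
  have hcommutant : ∀ t ∈ M.commutant, Set.MapsTo t s s := by
    rintro t ht _ ⟨x, hx, ξ, rfl⟩
    refine ⟨x, hx, t ξ, ?_⟩
    rw [vonNeumannAlgebra_mem_iff.1 hx t ht, vonNeumannAlgebra_mem_iff.1 hr t ht]
  have hM : ∀ t ∈ M.commutant.commutant, Set.MapsTo t s s := by
    rw [M.commutant_commutant]
    rintro t ht _ ⟨x, hx, ξ, rfl⟩
    exact ⟨t * x, mul_mem ht hx, ξ, rfl⟩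
  refine ⟨spanProjection s, ⟨isProjIn_spanProjection hcommutant, fun x hx =>
    (VonNeumannAlgebra.mem_commutant_iff.1 (isProjIn_spanProjection hM).1 x hx).symm⟩, ?_, ?_⟩
  · ext ξ
    exact spanProjection_apply_of_mem ⟨1, one_mem M, ξ, rfl⟩
  · rintro e he
    refine mul_spanProjection_eq_zero ?_
    rintro _ ⟨x, hx, ξ, rfl⟩
    exact congrArg (fun f : H →L[ℂ] H => f ξ) (he x hx)

theorem exists_isProjIn_vector_support (M : VonNeumannAlgebra H) (ξ : H) :
    ∃ R, IsProjIn M R ∧ R ξ = ξ ∧ ∀ q ∈ M, q ξ = 0 → q * R = 0 := by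
  let s : Set H := {η | ∃ t ∈ M.commutant, t ξ = η}
  refine ⟨spanProjection s, isProjIn_spanProjection ?_,
    spanProjection_apply_of_mem ⟨1, one_mem _, rfl⟩,
    fun q hq h => mul_spanProjection_eq_zero ?_⟩
  · rintro t ht _ ⟨t', ht', rfl⟩
    exact ⟨t * t', mul_mem ht ht', rfl⟩
  · rintro _ ⟨t, ht, rfl⟩
    rw [← vonNeumannAlgebra_mem_iff.1 hq t ht, h, map_zero]

end Basic

section StrongSum

section NormedSpace

variable {E : Type*} [NormedAddCommGroup E] [NormedSpace ℂ E] {ι : Type*} {v : ι → E →L[ℂ] E}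
  {V W : E →L[ℂ] E}

/-- The family `v` is summable to `V` in the strong operator topology. -/
def HasStrongSum (v : ι → E →L[ℂ] E) (V : E →L[ℂ] E) : Prop :=
  ∀ ξ, HasSum (fun i => v i ξ) (V ξ)

namespace HasStrongSum

theorem mul_left (h : HasStrongSum v V) (x : E →L[ℂ] E) :
    HasStrongSum (fun i => x * v i) (x * V) := fun ξ => (h ξ).mapL x

theorem mul_right (h : HasStrongSum v V) (x : E →L[ℂ] E) :
    HasStrongSum (fun i => v i * x) (V * x) := fun ξ => h (x ξ)

theorem unique (h : HasStrongSum v V) (h' : HasStrongSum v W) : V = W :=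
  ContinuousLinearMap.ext fun ξ => (h ξ).unique (h' ξ)

theorem single (i : ι) (h : ∀ j, j ≠ i → v j = 0) : HasStrongSum v (v i) := fun ξ =>
  hasSum_single i fun j hj => by rw [h j hj, zero_apply]

theorem mul_left_eq_self (h : HasStrongSum v V) {x : E →L[ℂ] E} (hx : ∀ i, x * v i = v i) :
    x * V = V :=
  (h.mul_left x).unique (by simpa only [hx] using h)

theorem mul_left_eq_zero (h : HasStrongSum v V) {x : E →L[ℂ] E} (hx : ∀ i, x * v i = 0) :
    x * V = 0 :=
  (h.mul_left x).unique fun ξ => by simpa only [hx, zero_apply] using hasSum_zero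

theorem mul_right_eq_zero (h : HasStrongSum v V) {x : E →L[ℂ] E} (hx : ∀ i, v i * x = 0) :
    V * x = 0 :=
  (h.mul_right x).unique fun ξ => by simpa only [hx, zero_apply] using hasSum_zero

end HasStrongSum

end NormedSpace

protected theorem HasStrongSum.inner {E : Type*} [NormedAddCommGroup E] [InnerProductSpace ℂ E]
    {ι : Type*} {v : ι → E →L[ℂ] E} {V : E →L[ℂ] E} (h : HasStrongSum v V) (ξ η : E) :
    HasSum (fun i => inner ℂ ξ (v i η)) (inner ℂ ξ (V η)) := by
  simpa only [innerSL_apply_apply] using (h η).mapL (innerSL ℂ ξ)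

variable {M : VonNeumannAlgebra H} {ι : Type*} {v : ι → H →L[ℂ] H} {V W : H →L[ℂ] H}

namespace HasStrongSum

theorem mem (h : HasStrongSum v V) (hv : ∀ i, v i ∈ M) : V ∈ M :=
  vonNeumannAlgebra_mem_iff.2 fun t ht ξ => ((h ξ).mapL t).unique <| by
    simpa only [vonNeumannAlgebra_mem_iff.1 (hv _) t ht] using h (t ξ)

theorem eq_star (h : HasStrongSum v V) (h' : HasStrongSum (fun i => star (v i)) W) :
    W = star V := by
  ext η
  refine ext_inner_left ℂ fun ξ => (h'.inner ξ η).unique ?_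
  have hstar := (h.inner η ξ).star
  simpa only [star_eq_adjoint, adjoint_inner_right, RCLike.star_def, inner_conj_symm] using hstar

theorem hasSum_re_inner (h : HasStrongSum (fun i => star (v i) * v i) V) (ξ : H) :
    HasSum (fun i => ‖v i ξ‖ ^ 2) (RCLike.re (inner ℂ (V ξ) ξ)) := by
  simpa only [norm_sq_apply_eq_re_inner, inner_re_symm ξ] using RCLike.hasSum_re ℂ (h.inner ξ ξ)

theorem hasSum_norm_sq (h : HasStrongSum (fun i => star (v i) * v i) (star V * V)) (ξ : H) :
    HasSum (fun i => ‖v i ξ‖ ^ 2) (‖V ξ‖ ^ 2) := by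
  simpa only [norm_sq_apply_eq_re_inner V] using h.hasSum_re_inner ξ

end HasStrongSum

theorem norm_sq_apply_le_of_nonneg {D : H →L[ℂ] H} (hD : 0 ≤ D) (ξ : H) :
    ‖D ξ‖ ^ 2 ≤ ‖D‖ * RCLike.re (inner ℂ (D ξ) ξ) := by
  obtain ⟨b, rfl⟩ := CStarAlgebra.nonneg_iff_eq_star_mul_self.1 hD
  calc ‖(star b * b) ξ‖ ^ 2 ≤ (‖star b‖ * ‖b ξ‖) ^ 2 := by
        gcongr; exact (star b).le_opNorm (b ξ)
    _ = ‖star b * b‖ * RCLike.re (inner ℂ ((star b * b) ξ) ξ) := by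
        rw [mul_pow, norm_star, CStarRing.norm_star_mul_self, norm_sq_apply_eq_re_inner, sq]

theorem hasStrongSum_star_mul_self_of_hasSum {h : H →L[ℂ] H} (hh : IsSelfAdjoint h)
    (hv : ∀ ξ, HasSum (fun i => ‖v i ξ‖ ^ 2) (RCLike.re (inner ℂ (h ξ) ξ))) :
    HasStrongSum (fun i => star (v i) * v i) h := by
  intro ξ
  let D (F : Finset ι) : H →L[ℂ] H := h - ∑ i ∈ F, star (v i) * v i
  have hD_inner (F : Finset ι) (η : H) : RCLike.re (inner ℂ (D F η) η) =
      RCLike.re (inner ℂ (h η) η) - ∑ i ∈ F, ‖v i η‖ ^ 2 := by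
    simp only [D, sub_apply, sum_apply, inner_sub_left, sum_inner, map_sub, map_sum,
      norm_sq_apply_eq_re_inner]
  have hD_nonneg (F : Finset ι) : 0 ≤ D F := by
    refine (nonneg_iff_isPositive _).2 (isPositive_def'.2 ⟨?_, fun η => ?_⟩)
    · exact hh.sub (isSelfAdjoint_sum F fun i _ => .star_mul_self (v i))
    · rw [reApplyInnerSelf_apply, hD_inner, sub_nonneg]
      exact sum_le_hasSum F (fun i _ => sq_nonneg _) (hv η)
  have hD_norm (F : Finset ι) : ‖D F‖ ≤ ‖h‖ :=
    CStarAlgebra.norm_le_norm_of_nonneg_of_le (hD_nonneg F)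
      (sub_le_self _ (Finset.sum_nonneg fun i _ => star_mul_self_nonneg (v i)))
  have hD_zero : Tendsto (fun F => ‖h‖ * RCLike.re (inner ℂ (D F ξ) ξ)) atTop (𝓝 0) := by
    simp only [hD_inner]
    simpa using ((hv ξ).const_sub (RCLike.re (inner ℂ (h ξ) ξ))).const_mul ‖h‖
  have hD_sq : Tendsto (fun F => ‖D F ξ‖ ^ 2) atTop (𝓝 0) :=
    squeeze_zero (fun F => sq_nonneg _) (fun F => (norm_sq_apply_le_of_nonneg (hD_nonneg F) ξ).trans
      (mul_le_mul_of_nonneg_right (hD_norm F)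
        (((nonneg_iff_isPositive _).1 (hD_nonneg F)).re_inner_nonneg_left ξ))) hD_zero
  have hD_tendsto : Tendsto (fun F => D F ξ) atTop (𝓝 0) :=
    tendsto_zero_iff_norm_tendsto_zero.2 <| by simpa using hD_sq.sqrt
  simpa [HasSum, D] using hD_tendsto.const_sub (h ξ)

end StrongSum

section PartialIsometry

variable {M : VonNeumannAlgebra H} {ι : Type*}

/-- Partial isometries, encoded algebraically by `v v* v = v`; `v* v` and `v v*` are the initial
and the final projection. -/
def IsPartialIsometry (v : H →L[ℂ] H) : Prop := v * star v * v = v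

namespace IsPartialIsometry

variable {v : H →L[ℂ] H}

protected theorem star (h : IsPartialIsometry v) : IsPartialIsometry (star v) := by
  simpa [IsPartialIsometry, mul_assoc] using congrArg star h

theorem isProjIn_star_mul_self (h : IsPartialIsometry v) (hv : v ∈ M) : IsProjIn M (star v * v) :=
  ⟨mul_mem (star_mem hv) hv, .star_mul_self v, by rw [mul_assoc, ← mul_assoc v, h]⟩

theorem isProjIn_mul_star_self (h : IsPartialIsometry v) (hv : v ∈ M) :
    IsProjIn M (v * star v) := by
  simpa using h.star.isProjIn_star_mul_self (star_mem hv)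

theorem of_isProjIn {e : H →L[ℂ] H} (he : IsProjIn M e) (h : star v * v = e) :
    IsPartialIsometry v := by
  have hzero : v * (1 - e) = 0 := eq_zero_of_star_mul_self_eq_zero <| by
    rw [star_mul, he.one_sub.star_eq, mul_assoc, ← mul_assoc (star v), h, ← mul_assoc,
      he.isStarProjection.one_sub_mul_self, zero_mul]
  rw [IsPartialIsometry, mul_assoc, h]
  exact (sub_eq_zero.1 (by rwa [mul_sub, mul_one] at hzero)).symm

end IsPartialIsometry

theorem IsProjIn.isPartialIsometry {p : H →L[ℂ] H} (hp : IsProjIn M p) : IsPartialIsometry p := by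
  rw [IsPartialIsometry, hp.star_eq, hp.mul_self, hp.mul_self]

/-- A family of partial isometries of `M` with pairwise orthogonal initial projections and
pairwise orthogonal final projections. -/
structure IsOrthogonalFamily (M : VonNeumannAlgebra H) (v : ι → H →L[ℂ] H) : Prop where
  mem : ∀ i, v i ∈ M
  isPartialIsometry : ∀ i, IsPartialIsometry (v i)
  star_mul : Pairwise fun i j => star (v i) * v j = 0
  mul_star : Pairwise fun i j => v i * star (v j) = 0

namespace IsOrthogonalFamily

variable {v : ι → H →L[ℂ] H} {V : H →L[ℂ] H}

protected theorem star (h : IsOrthogonalFamily M v) : IsOrthogonalFamily M fun i => star (v i) where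
  mem i := star_mem (h.mem i)
  isPartialIsometry i := (h.isPartialIsometry i).star
  star_mul i j hij := by simpa using h.mul_star hij
  mul_star i j hij := by simpa using h.star_mul hij

theorem star_sum_mul_sum (h : IsOrthogonalFamily M v) (F : Finset ι) :
    star (∑ i ∈ F, v i) * ∑ i ∈ F, v i = ∑ i ∈ F, star (v i) * v i := by
  rw [star_sum, Finset.sum_mul_sum]
  exact Finset.sum_congr rfl fun i hi =>
    Finset.sum_eq_single_of_mem i hi fun j _ hj => h.star_mul hj.symm

theorem norm_sum_apply_sq (h : IsOrthogonalFamily M v) (F : Finset ι) (ξ : H) :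
    ‖∑ i ∈ F, v i ξ‖ ^ 2 = ∑ i ∈ F, ‖v i ξ‖ ^ 2 := by
  rw [← sum_apply, norm_sq_apply_eq_re_inner, h.star_sum_mul_sum, sum_apply, sum_inner, map_sum]
  simp only [norm_sq_apply_eq_re_inner]

theorem norm_sum_apply_le (h : IsOrthogonalFamily M v) (F : Finset ι) (ξ : H) :
    ‖∑ i ∈ F, v i ξ‖ ≤ ‖ξ‖ := by
  let E : H →L[ℂ] H := ∑ i ∈ F, star (v i) * v i
  have hE : IsProjIn M E := by
    refine ⟨sum_mem fun i _ => mul_mem (star_mem (h.mem i)) (h.mem i),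
      isSelfAdjoint_sum F fun i _ => .star_mul_self (v i), ?_⟩
    rw [Finset.sum_mul_sum]
    refine Finset.sum_congr rfl fun i hi => ?_
    rw [Finset.sum_eq_single_of_mem i hi fun j _ hj => ?_]
    · exact ((h.isPartialIsometry i).isProjIn_star_mul_self (h.mem i)).mul_self
    · rw [mul_assoc, ← mul_assoc (v i), h.mul_star hj.symm, zero_mul, mul_zero]
  rw [← sum_apply, norm_apply_eq_of_star_mul_self_eq (b := E)
    (by rw [h.star_sum_mul_sum, hE.star_eq, hE.mul_self])]
  exact hE.norm_apply_le ξ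

theorem summable_apply (h : IsOrthogonalFamily M v) (ξ : H) : Summable fun i => v i ξ := by
  have hsq : Summable fun i => ‖v i ξ‖ ^ 2 :=
    summable_of_sum_le (c := ‖ξ‖ ^ 2) (fun i => sq_nonneg _) fun F => by
      rw [← h.norm_sum_apply_sq]
      exact pow_le_pow_left₀ (norm_nonneg _) (h.norm_sum_apply_le F ξ) 2
  refine summable_iff_vanishing_norm.2 fun ε hε => ?_
  obtain ⟨F₀, hF₀⟩ := summable_iff_vanishing_norm.1 hsq (ε ^ 2) (by positivity)
  refine ⟨F₀, fun F hF => lt_of_pow_lt_pow_left₀ 2 hε.le ?_⟩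
  rw [h.norm_sum_apply_sq]
  exact (le_abs_self _).trans_lt (hF₀ F hF)

theorem exists_hasStrongSum (h : IsOrthogonalFamily M v) : ∃ V, HasStrongSum v V := by
  have htendsto : Tendsto (fun (F : Finset ι) ξ => (∑ i ∈ F, v i : H →L[ℂ] H) ξ) atTop
      (𝓝 fun ξ => ∑' i, v i ξ) :=
    tendsto_pi_nhds.2 fun ξ => by
      simpa only [sum_apply, HasSum, SummationFilter.unconditional_filter] using
        (h.summable_apply ξ).hasSum
  refine ⟨(linearMapOfTendsto _ (fun F : Finset ι => (∑ i ∈ F, v i : H →L[ℂ] H).toLinearMap)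
    htendsto).mkContinuous 1 fun ξ => ?_, fun ξ => (h.summable_apply ξ).hasSum⟩
  rw [one_mul]
  exact le_of_tendsto' (h.summable_apply ξ).hasSum.norm fun F => h.norm_sum_apply_le F ξ

theorem hasStrongSum_star (h : IsOrthogonalFamily M v) (hV : HasStrongSum v V) :
    HasStrongSum (fun i => star (v i)) (star V) := by
  obtain ⟨W, hW⟩ := h.star.exists_hasStrongSum
  rwa [← hV.eq_star hW]

theorem star_mul_sum (h : IsOrthogonalFamily M v) (hV : HasStrongSum v V) (i : ι) :
    star (v i) * V = star (v i) * v i :=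
  (hV.mul_left _).unique (.single i fun _ hj => h.star_mul hj.symm)

theorem sum_mul_star (h : IsOrthogonalFamily M v) (hV : HasStrongSum v V) (i : ι) :
    V * star (v i) = v i * star (v i) :=
  (hV.mul_right _).unique (.single i fun _ hj => h.mul_star hj)

theorem hasStrongSum_star_mul_self (h : IsOrthogonalFamily M v) (hV : HasStrongSum v V) :
    HasStrongSum (fun i => star (v i) * v i) (star V * V) := by
  convert hV.mul_left (star V) using 2 with i
  simpa using (congrArg star (h.star_mul_sum hV i)).symm

theorem isPartialIsometry_sum (h : IsOrthogonalFamily M v) (hV : HasStrongSum v V) :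
    IsPartialIsometry V := by
  have hsum := (h.hasStrongSum_star_mul_self hV).mul_left V
  simp only [← mul_assoc, h.sum_mul_star hV] at hsum
  have hterm (i : ι) : v i * star (v i) * v i = v i := h.isPartialIsometry i
  exact hsum.unique (by simpa only [hterm] using hV)

end IsOrthogonalFamily

end PartialIsometry

section Halving

variable {M : VonNeumannAlgebra H}

theorem cfc_mem_vonNeumannAlgebra {a : H →L[ℂ] H} (ha : a ∈ M) (f : ℝ → ℝ) : cfc f a ∈ M :=
  vonNeumannAlgebra_mem_iff.2 fun _ ht ξ =>
    have hcomm := Commute.cfc_real (VonNeumannAlgebra.mem_commutant_iff.1 ht a ha) f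
    congrArg (fun x : H →L[ℂ] H => x ξ) hcomm.eq.symm

/-- The spectral projection `χ_{(c, ∞)}(a)` of a self-adjoint operator `a`, as the projection onto
the closed span of the ranges of all `f(a)`, where `f` is continuous and vanishes on `(-∞, c]`. -/
def spectralProjection (a : H →L[ℂ] H) (c : ℝ) : H →L[ℂ] H :=
  spanProjection {η | ∃ f : ℝ → ℝ, Continuous f ∧ (∀ t ≤ c, f t = 0) ∧ ∃ ξ, cfc f a ξ = η}

section SpectralProjection

variable {a : H →L[ℂ] H} {c : ℝ} {f g : ℝ → ℝ}

theorem isProjIn_spectralProjection (ha : a ∈ M) (c : ℝ) : IsProjIn M (spectralProjection a c) :=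
  isProjIn_spanProjection <| by
    rintro t ht _ ⟨f, hf, hf0, ξ, rfl⟩
    exact ⟨f, hf, hf0, t ξ,
      (vonNeumannAlgebra_mem_iff.1 (cfc_mem_vonNeumannAlgebra ha f) t ht ξ).symm⟩

theorem spectralProjection_mul_cfc (hf : Continuous f) (hf0 : ∀ t ≤ c, f t = 0) :
    spectralProjection a c * cfc f a = cfc f a :=
  ContinuousLinearMap.ext fun ξ => spanProjection_apply_of_mem ⟨f, hf, hf0, ξ, rfl⟩

theorem mul_spectralProjection_eq_zero {y : H →L[ℂ] H}
    (h : ∀ g : ℝ → ℝ, Continuous g → (∀ t ≤ c, g t = 0) → y * cfc g a = 0) :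
    y * spectralProjection a c = 0 := by
  refine mul_spanProjection_eq_zero ?_
  rintro _ ⟨g, hg, hg0, ξ, rfl⟩
  rw [← mul_apply_eq_comp, h g hg hg0, zero_apply]

theorem commute_cfc_spectralProjection (hf : Continuous f) :
    Commute (cfc f a) (spectralProjection a c) := by
  have hinv : (1 - spectralProjection a c) * cfc f a * spectralProjection a c = 0 := by
    refine mul_spectralProjection_eq_zero fun g hg hg0 => ?_
    have hfg : spectralProjection a c * cfc (fun t => f t * g t) a = cfc (fun t => f t * g t) a :=
      spectralProjection_mul_cfc (hf.mul hg) fun t ht => by rw [hg0 t ht, mul_zero]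
    rw [cfc_mul f g a hf.continuousOn hg.continuousOn] at hfg
    rw [mul_assoc, sub_mul, one_mul, hfg, sub_self]
  have hstar : star (spectralProjection a c) = spectralProjection a c :=
    isStarProjection_starProjection.isSelfAdjoint.star_eq
  rw [sub_mul, one_mul, sub_mul, sub_eq_zero] at hinv
  have hinv_star := congrArg star hinv
  simp only [star_mul, hstar, (cfc_predicate f a).star_eq] at hinv_star
  rw [Commute, SemiconjBy, hinv, mul_assoc, ← hinv_star]

theorem cfc_mul_spectralProjection_congr (hf : Continuous f) (hg : Continuous g)
    (hfg : ∀ t, c ≤ t → f t = g t) :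
    cfc f a * spectralProjection a c = cfc g a * spectralProjection a c := by
  rw [← sub_eq_zero, ← sub_mul, ← cfc_sub f g a hf.continuousOn hg.continuousOn]
  refine mul_spectralProjection_eq_zero fun k hk hk0 => ?_
  have hzero : (fun t => (f t - g t) * k t) = fun _ => 0 := by
    funext t
    rcases le_total c t with ht | ht
    · rw [hfg t ht, sub_self, zero_mul]
    · rw [hk0 t ht, mul_zero]
  rw [← cfc_mul (fun t => f t - g t) k a (hf.sub hg).continuousOn hk.continuousOn, hzero,
    cfc_const_zero]

theorem cfc_mul_one_sub_spectralProjection_congr (hf : Continuous f) (hg : Continuous g)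
    (hfg : ∀ t ≤ c, f t = g t) :
    cfc f a * (1 - spectralProjection a c) = cfc g a * (1 - spectralProjection a c) := by
  have hfix : spectralProjection a c * cfc (fun t => f t - g t) a = cfc (fun t => f t - g t) a :=
    spectralProjection_mul_cfc (hf.sub hg) fun t ht => sub_eq_zero.2 (hfg t ht)
  have hcomm : Commute (cfc (fun t => f t - g t) a) (spectralProjection a c) :=
    commute_cfc_spectralProjection (hf.sub hg)
  rw [← hcomm.eq, cfc_sub f g a hf.continuousOn hg.continuousOn] at hfix
  rw [← sub_eq_zero, ← sub_mul, mul_sub, mul_one, hfix, sub_self]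

end SpectralProjection

theorem exists_halving_functions : ∃ f g : ℝ → ℝ, Continuous f ∧ Continuous g ∧
    ∀ t, 1 / 2 ≤ t → f t * f t * t = 1 ∧ f t * f t + g t * g t = 2 := by
  have hmax (t : ℝ) : 0 < max t (1 / 2) := lt_of_lt_of_le one_half_pos (le_max_right _ _)
  refine ⟨fun t => (√(max t (1 / 2)))⁻¹, fun t => √(max (2 * t - 1) 0 / max t (1 / 2)),
    Continuous.inv₀ (by fun_prop) fun t => (Real.sqrt_pos.2 (hmax t)).ne',
    (Continuous.div (by fun_prop) (by fun_prop) fun t => (hmax t).ne').sqrt, fun t ht => ?_⟩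
  have ht0 : 0 < t := by linarith
  have hdiv : 0 ≤ (2 * t - 1) / t := div_nonneg (by linarith) ht0.le
  simp only [max_eq_left ht, max_eq_left (show 0 ≤ 2 * t - 1 by linarith), ← mul_inv,
    Real.mul_self_sqrt ht0.le, Real.mul_self_sqrt hdiv]
  constructor <;> field

theorem exists_halving_operators {a : H →L[ℂ] H} (ha : a ∈ M) (hsa : IsSelfAdjoint a) :
    ∃ q K L : H →L[ℂ] H, IsProjIn M q ∧ K ∈ M ∧ L ∈ M ∧ star K = K ∧ star L = L ∧
      Commute a q ∧ Commute K q ∧ Commute L q ∧ Commute K a ∧ Commute L a ∧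
      K * K * a * q = q ∧ K * K * q + L * L * q = 2 * q ∧ 0 ≤ (1 - 2 * a) * (1 - q) := by
  obtain ⟨f, g, hf, hg, hfg⟩ := exists_halving_functions
  have hq : IsProjIn M (spectralProjection a (1 / 2)) := isProjIn_spectralProjection ha _
  refine ⟨spectralProjection a (1 / 2), cfc f a, cfc g a, hq, cfc_mem_vonNeumannAlgebra ha f,
    cfc_mem_vonNeumannAlgebra ha g, (cfc_predicate f a).star_eq, (cfc_predicate g a).star_eq, ?_,
    commute_cfc_spectralProjection hf, commute_cfc_spectralProjection hg,
    (Commute.refl a).cfc_real f, (Commute.refl a).cfc_real g, ?_, ?_, ?_⟩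
  · simpa only [cfc_id' ℝ a] using
      commute_cfc_spectralProjection (a := a) (c := 1 / 2) (f := fun t => t) continuous_id'
  · have h := cfc_mul_spectralProjection_congr (a := a) (f := fun t => f t * f t * t)
      (g := fun _ => (1 : ℝ)) (c := 1 / 2) (by fun_prop) (by fun_prop) fun t ht => (hfg t ht).1
    rwa [cfc_mul (fun t => f t * f t) (fun t => t) a, cfc_mul f f a, cfc_id' ℝ a,
      cfc_const_one ℝ a, one_mul] at h
  · have h := cfc_mul_spectralProjection_congr (a := a) (f := fun t => f t * f t + g t * g t)
      (g := fun _ => (2 : ℝ)) (c := 1 / 2) (by fun_prop) (by fun_prop) fun t ht => (hfg t ht).2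
    rwa [cfc_add a (fun t => f t * f t) (fun t => g t * g t), cfc_mul f f a, cfc_mul g g a,
      add_mul, cfc_const (2 : ℝ) a, map_ofNat] at h
  · have h := cfc_mul_one_sub_spectralProjection_congr (a := a) (f := fun t : ℝ => 1 - 2 * t)
      (g := fun t => max (1 - 2 * t) 0) (c := 1 / 2) (by fun_prop) (by fun_prop)
      fun t ht => (max_eq_left (by linarith)).symm
    have hcomm : Commute (cfc (fun t : ℝ => max (1 - 2 * t) 0) a) (spectralProjection a (1 / 2)) :=
      commute_cfc_spectralProjection (by fun_prop)
    rw [cfc_sub (fun _ => (1 : ℝ)) (fun t => 2 * t) a, cfc_const_one ℝ a,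
      cfc_const_mul 2 (fun t => t) a, cfc_id' ℝ a, two_smul, ← two_mul] at h
    rw [h]
    exact ((Commute.one_right _).sub_right hcomm).mul_nonneg
      (cfc_nonneg fun t _ => le_max_right _ _) hq.one_sub.isStarProjection.nonneg

/-- Multipliers splitting `2a` into a projection and a positive contraction; they exist for every
`0 ≤ a ≤ 1` in `M`, see `exists_isHalving`. -/
structure IsHalving (M : VonNeumannAlgebra H) (a k m : H →L[ℂ] H) : Prop where
  left_mem : k ∈ M
  right_mem : m ∈ M
  star_left : star k = k
  star_right : star m = m
  left_comm : Commute k a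
  right_comm : Commute m a
  sq_add_sq : k * k + m * m = 2
  isProjIn : IsProjIn M (k * a * k)
  le_one : m * a * m ≤ 1

theorem IsProjIn.mul_mul_mul_self {q x : H →L[ℂ] H} (hq : IsProjIn M q) (hx : Commute x q) :
    x * q * (x * q) = x * x * q := by
  rw [mul_assoc, ← mul_assoc q, ← hx.eq, mul_assoc x, hq.mul_self, mul_assoc]

theorem IsProjIn.mul_add_smul_one_sub_mul_self {q x : H →L[ℂ] H} (hq : IsProjIn M q)
    (hx : Commute x q) (c : ℝ) :
    (x * q + c • (1 - q)) * (x * q + c • (1 - q)) = x * x * q + (c * c) • (1 - q) := by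
  have hleft : x * q * (1 - q) = 0 := by
    rw [mul_assoc, hq.isStarProjection.mul_one_sub_self, mul_zero]
  have hright : (1 - q) * (x * q) = 0 := by
    rw [hx.eq, ← mul_assoc, hq.isStarProjection.one_sub_mul_self, zero_mul]
  rw [add_mul, mul_add, mul_add, smul_mul_smul_comm, mul_smul_comm, smul_mul_assoc,
    hq.mul_mul_mul_self hx, hleft, hright, hq.one_sub.mul_self, smul_zero, add_zero, zero_add]

-- With `q = χ_{(1/2, ∞)}(a)`: `k² a = 1` and `m² a = 2a - 1` on `q`, while `k = 0` and `m² = 2` on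
-- `1 - q`.
theorem exists_isHalving {a : H →L[ℂ] H} (ha : a ∈ M) (hsa : IsSelfAdjoint a) (h1 : a ≤ 1) :
    ∃ k m, IsHalving M a k m := by
  obtain ⟨q, K, L, hq, hKM, hLM, hK, hL, haq, hKq, hLq, hKa, hLa, hKK, hKL, hpos⟩ :=
    exists_halving_operators ha hsa
  have hr : star (1 - q) = 1 - q := hq.one_sub.star_eq
  have har : Commute a (1 - q) := (Commute.one_right a).sub_right haq
  have hk : K * q * (K * q) = K * K * q := hq.mul_mul_mul_self hKq
  have hm : (L * q + √2 • (1 - q)) * (L * q + √2 • (1 - q)) = L * L * q + 2 * (1 - q) := by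
    rw [hq.mul_add_smul_one_sub_mul_self hLq, Real.mul_self_sqrt zero_le_two, two_smul, ← two_mul]
  have hka : Commute (K * q) a := hKa.mul_left haq.symm
  have hma : Commute (L * q + √2 • (1 - q)) a :=
    (hLa.mul_left haq.symm).add_left (har.symm.smul_left _)
  have haKK : a * (K * K * q) = q := by rw [← mul_assoc, ← (hKa.mul_left hKa).eq, hKK]
  have hkak : K * q * a * (K * q) = q := by rw [hka.eq, mul_assoc, hk, haKK]
  have hmam : (L * q + √2 • (1 - q)) * a * (L * q + √2 • (1 - q)) = 2 * a - q := by
    have haL : a * (L * L * q) = 2 * (a * q) - q := by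
      rw [eq_sub_of_add_eq' hKL, mul_sub, haKK, ← mul_assoc, (Commute.ofNat_right a 2).eq,
        mul_assoc]
    rw [hma.eq, mul_assoc, hm, mul_add, haL, ← mul_assoc a 2, (Commute.ofNat_right a 2).eq]
    noncomm_ring
  refine ⟨K * q, L * q + √2 • (1 - q), mul_mem hKM hq.1,
    add_mem (mul_mem hLM hq.1) (smul_mem_vonNeumannAlgebra (√2 : ℝ) hq.one_sub.1), ?_, ?_,
    hka, hma, ?_, by rwa [hkak], ?_⟩
  · rw [star_mul, hK, hq.star_eq, hKq.eq]
  · rw [star_add, star_smul, star_mul, hL, hq.star_eq, hr, hLq.eq, star_trivial]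
  · rw [hk, hm, ← add_assoc, hKL, ← mul_add, add_sub_cancel, mul_one]
  · have hnonneg := star_left_conjugate_nonneg (sub_nonneg.2 h1) q
    rw [hmam, ← sub_nonneg]
    rw [hq.star_eq, ((Commute.one_left q).sub_left haq).eq.symm, mul_assoc, hq.mul_self] at hnonneg
    convert add_nonneg (add_nonneg hnonneg hnonneg) hpos using 1
    noncomm_ring

end Halving

section NormHalving

variable {M : VonNeumannAlgebra H}

theorem norm_sq_apply_add_norm_sq_apply {a b c : H →L[ℂ] H}
    (h : star a * a + star b * b = 2 * (star c * c)) (ξ : H) :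
    ‖a ξ‖ ^ 2 + ‖b ξ‖ ^ 2 = 2 * ‖c ξ‖ ^ 2 := by
  rw [norm_sq_apply_eq_re_inner a, norm_sq_apply_eq_re_inner b, norm_sq_apply_eq_re_inner c,
    ← map_add, ← inner_add_left, ← add_apply, h, two_mul, add_apply, inner_add_left, map_add,
    two_mul]

-- This replaces the polar decomposition: iterating it gives partial isometries `u₁, u₂, …` with
-- `y* y = ∑ 2⁻ⁿ uₙ* uₙ` and `y y* = ∑ 2⁻ⁿ uₙ uₙ*`.
theorem exists_norm_halving {y : H →L[ℂ] H} (hy : y ∈ M) (h1 : ‖y‖ ≤ 1) :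
    ∃ u ∈ M, ∃ y' ∈ M, IsPartialIsometry u ∧ ‖y'‖ ≤ 1 ∧
      (∀ ξ, ‖u ξ‖ ^ 2 + ‖y' ξ‖ ^ 2 = 2 * ‖y ξ‖ ^ 2) ∧
      ∀ ξ, ‖star u ξ‖ ^ 2 + ‖star y' ξ‖ ^ 2 = 2 * ‖star y ξ‖ ^ 2 := by
  have ha1 : star y * y ≤ 1 :=
    (CStarAlgebra.norm_le_one_iff_of_nonneg _ (star_mul_self_nonneg y)).1 <| by
      rw [CStarRing.norm_star_mul_self]
      exact mul_le_one₀ h1 (norm_nonneg y) h1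
  obtain ⟨k, m, hkm⟩ := exists_isHalving (mul_mem (star_mem hy) hy) (.star_mul_self y) ha1
  have star_mul_self {b : H →L[ℂ] H} (hb : star b = b) :
      star (y * b) * (y * b) = b * (star y * y) * b := by
    rw [star_mul, hb]
    noncomm_ring
  have mul_star_self {b : H →L[ℂ] H} (hb : star b = b) :
      y * b * star (y * b) = y * (b * b) * star y := by
    rw [star_mul, hb]
    noncomm_ring
  have hu : IsPartialIsometry (y * k) := .of_isProjIn hkm.isProjIn (star_mul_self hkm.star_left)
  have hy' : ‖y * m‖ ^ 2 ≤ 1 := by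
    rw [sq, ← CStarRing.norm_star_mul_self, star_mul_self hkm.star_right]
    refine (CStarAlgebra.norm_le_one_iff_of_nonneg _ ?_).2 hkm.le_one
    rw [← star_mul_self hkm.star_right]
    exact star_mul_self_nonneg _
  refine ⟨y * k, mul_mem hy hkm.left_mem, y * m, mul_mem hy hkm.right_mem, hu,
    (pow_le_one_iff_of_nonneg (norm_nonneg _) two_ne_zero).1 hy',
    norm_sq_apply_add_norm_sq_apply ?_, norm_sq_apply_add_norm_sq_apply ?_⟩
  · rw [star_mul_self hkm.star_left, star_mul_self hkm.star_right, hkm.left_comm.eq,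
      hkm.right_comm.eq, mul_assoc, mul_assoc _ m, ← mul_add, hkm.sq_add_sq,
      (Commute.ofNat_right _ 2).eq]
  · rw [star_star, star_star, star_star, mul_star_self hkm.star_left, mul_star_self hkm.star_right,
      ← add_mul, ← mul_add, hkm.sq_add_sq, (Commute.ofNat_right y 2).eq, mul_assoc]

end NormHalving

section Corner

variable {M : VonNeumannAlgebra H} {e f : H →L[ℂ] H}

/-- `x` belongs to the corner `f M e`. -/
structure IsInCorner (M : VonNeumannAlgebra H) (f e x : H →L[ℂ] H) : Prop where
  mem : x ∈ M
  left : f * x = x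
  right : x * e = x

namespace IsInCorner

variable {x y : H →L[ℂ] H}

protected theorem star (hx : IsInCorner M f e x) (he : IsProjIn M e) (hf : IsProjIn M f) :
    IsInCorner M e f (star x) where
  mem := star_mem hx.mem
  left := by simpa [he.star_eq] using congrArg star hx.right
  right := by simpa [hf.star_eq] using congrArg star hx.left

theorem smul (hx : IsInCorner M f e x) (c : ℂ) : IsInCorner M f e (c • x) where
  mem := smul_mem_vonNeumannAlgebra c hx.mem
  left := by rw [mul_smul_comm, hx.left]
  right := by rw [smul_mul_assoc, hx.right]

theorem of_apply_eq_zero (hy : IsInCorner M f e y) (he : IsProjIn M e) (hf : IsProjIn M f)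
    (hx : x ∈ M) (h : ∀ ξ, y ξ = 0 → x ξ = 0)
    (h' : ∀ ξ, star y ξ = 0 → star x ξ = 0) : IsInCorner M f e x := by
  have mul_eq {a b q : H →L[ℂ] H} (hb : b * q = b) (hab : ∀ ξ, b ξ = 0 → a ξ = 0) : a * q = a := by
    ext ξ
    have h0 : a (q ξ - ξ) = 0 := hab _ <| by
      rw [map_sub, ← mul_apply_eq_comp, hb, sub_self]
    rwa [map_sub, sub_eq_zero] at h0
  refine ⟨hx, ?_, mul_eq hy.right h⟩
  simpa [hf.star_eq] using congrArg star (mul_eq (hy.star he hf).right h')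

theorem exists_halving (hy : IsInCorner M f e y) (he : IsProjIn M e) (hf : IsProjIn M f)
    (h1 : ‖y‖ ≤ 1) : ∃ u y', IsInCorner M f e u ∧ IsPartialIsometry u ∧ IsInCorner M f e y' ∧
      ‖y'‖ ≤ 1 ∧ (∀ ξ, ‖u ξ‖ ^ 2 + ‖y' ξ‖ ^ 2 = 2 * ‖y ξ‖ ^ 2) ∧
      ∀ ξ, ‖star u ξ‖ ^ 2 + ‖star y' ξ‖ ^ 2 = 2 * ‖star y ξ‖ ^ 2 := by
  obtain ⟨u, hu, y', hy', hui, hy'1, hnorm, hnorm_star⟩ := exists_norm_halving hy.mem h1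
  have eq_zero {a b c : H →L[ℂ] H} (h : ∀ ξ, ‖a ξ‖ ^ 2 + ‖b ξ‖ ^ 2 = 2 * ‖c ξ‖ ^ 2) (ξ : H)
      (hc : c ξ = 0) : a ξ = 0 ∧ b ξ = 0 := by
    have hzero := h ξ
    rwa [hc, norm_zero, zero_pow two_ne_zero, mul_zero,
      add_eq_zero_iff_of_nonneg (sq_nonneg _) (sq_nonneg _), sq_eq_zero_iff, sq_eq_zero_iff,
      norm_eq_zero, norm_eq_zero] at hzero
  exact ⟨u, y', hy.of_apply_eq_zero he hf hu (fun ξ h => (eq_zero hnorm ξ h).1)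
    (fun ξ h => (eq_zero hnorm_star ξ h).1), hui, hy.of_apply_eq_zero he hf hy'
    (fun ξ h => (eq_zero hnorm ξ h).2) (fun ξ h => (eq_zero hnorm_star ξ h).2), hy'1, hnorm,
    hnorm_star⟩

theorem exists_smul_norm_eq_one (hy : IsInCorner M f e y) (h0 : y ≠ 0) :
    ∃ x, IsInCorner M f e x ∧ ‖x‖ = 1 ∧ y = (‖y‖ : ℂ) • x := by
  have hy0 : (‖y‖ : ℂ) ≠ 0 := mod_cast norm_ne_zero_iff.2 h0
  refine ⟨(‖y‖ : ℂ)⁻¹ • y, hy.smul _, ?_, (smul_inv_smul₀ hy0 y).symm⟩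
  rw [norm_smul, norm_inv, Complex.norm_real, norm_norm, inv_mul_cancel₀ (norm_ne_zero_iff.2 h0)]

theorem exists_isPartialIsometry_ne_zero (hy : IsInCorner M f e y) (he : IsProjIn M e)
    (hf : IsProjIn M f) (h0 : y ≠ 0) :
    ∃ u, IsInCorner M f e u ∧ IsPartialIsometry u ∧ u ≠ 0 := by
  obtain ⟨x, hx, hx1, -⟩ := hy.exists_smul_norm_eq_one h0
  obtain ⟨u, y', hu, hui, -, hy'1, hnorm, -⟩ := hx.exists_halving he hf hx1.le
  refine ⟨u, hu, hui, ?_⟩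
  rintro rfl
  have hx_le : ‖x‖ ≤ 3 / 4 := x.opNorm_le_bound (by norm_num) fun ξ => by
    have hy'ξ : ‖y' ξ‖ ≤ ‖ξ‖ := (y'.le_of_opNorm_le hy'1 ξ).trans_eq (one_mul _)
    have h := hnorm ξ
    rw [zero_apply, norm_zero] at h
    nlinarith [norm_nonneg (y' ξ), norm_nonneg ξ, norm_nonneg (x ξ)]
  linarith

theorem norm_sq_apply_le_add (he : IsProjIn M e) (hf : IsProjIn M f) {ξ η : H}
    (h : ∀ u, IsInCorner M f e u → IsPartialIsometry u → ‖u ξ‖ ≤ ‖star u η‖) (n : ℕ)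
    (hy : IsInCorner M f e y) (h1 : ‖y‖ ≤ 1) :
    ‖y ξ‖ ^ 2 ≤ ‖star y η‖ ^ 2 + ‖ξ‖ ^ 2 * (1 / 2) ^ n := by
  induction n generalizing y with
  | zero =>
    have hyξ : ‖y ξ‖ ≤ ‖ξ‖ := (y.le_of_opNorm_le h1 ξ).trans_eq (one_mul _)
    rw [pow_zero, mul_one]
    exact (pow_le_pow_left₀ (norm_nonneg _) hyξ 2).trans (le_add_of_nonneg_left (sq_nonneg _))
  | succ n ih =>
    obtain ⟨u, y', hu, hui, hy', hy'1, hnorm, hnorm_star⟩ := hy.exists_halving he hf h1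
    have huξ := pow_le_pow_left₀ (norm_nonneg _) (h u hu hui) 2
    have hy'ξ := ih hy' hy'1
    rw [pow_succ (1 / 2 : ℝ)]
    linarith [hnorm ξ, hnorm_star η]

theorem norm_apply_le_norm_star_apply (hy : IsInCorner M f e y) (he : IsProjIn M e)
    (hf : IsProjIn M f) {ξ η : H}
    (h : ∀ u, IsInCorner M f e u → IsPartialIsometry u → ‖u ξ‖ ≤ ‖star u η‖) :
    ‖y ξ‖ ≤ ‖star y η‖ := by
  rcases eq_or_ne y 0 with rfl | h0
  · rw [zero_apply, norm_zero]
    exact norm_nonneg _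
  obtain ⟨x, hx, hx1, hyx⟩ := hy.exists_smul_norm_eq_one h0
  have hlim : Tendsto (fun n : ℕ => ‖star x η‖ ^ 2 + ‖ξ‖ ^ 2 * (1 / 2) ^ n) atTop
      (𝓝 (‖star x η‖ ^ 2)) := by
    simpa using ((tendsto_pow_atTop_nhds_zero_of_lt_one (r := (1 / 2 : ℝ)) (by norm_num)
      (by norm_num)).const_mul (‖ξ‖ ^ 2)).const_add (‖star x η‖ ^ 2)
  have hle : ‖x ξ‖ ≤ ‖star x η‖ :=
    (sq_le_sq₀ (norm_nonneg _) (norm_nonneg _)).1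
      (ge_of_tendsto' hlim fun n => norm_sq_apply_le_add he hf h n hx hx1.le)
  rw [hyx, star_smul, smul_apply, smul_apply, norm_smul, norm_smul, norm_star]
  exact mul_le_mul_of_nonneg_left hle (norm_nonneg _)

end IsInCorner

end Corner

section Maximality

theorem exists_maximal_pairwise {α : Type*} {Q : α → Prop} {r : α → α → Prop} {S₀ : Set α}
    (hQ : ∀ x ∈ S₀, Q x) (hr : S₀.Pairwise r) :
    ∃ S, S₀ ⊆ S ∧ (∀ x ∈ S, Q x) ∧ S.Pairwise r ∧
      ∀ x, Q x → (∀ y ∈ S, x ≠ y → r x y ∧ r y x) → x ∈ S := by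
  obtain ⟨S, hS₀, hS⟩ := zorn_subset_nonempty {S : Set α | (∀ x ∈ S, Q x) ∧ S.Pairwise r}
    (fun c hc hchain _ => ⟨⋃₀ c, ⟨fun x ⟨s, hs, hx⟩ => (hc hs).1 x hx,
      (Set.pairwise_sUnion hchain.directedOn).2 fun s hs => (hc hs).2⟩,
      fun _ => Set.subset_sUnion_of_mem⟩) S₀ ⟨hQ, hr⟩
  exact ⟨S, hS₀, hS.prop.1, hS.prop.2, fun x hx hxS => hS.mem_of_prop_insert
    ⟨Set.forall_mem_insert.2 ⟨hx, hS.prop.1⟩, Set.pairwise_insert.2 ⟨hS.prop.2, hxS⟩⟩⟩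

variable {M : VonNeumannAlgebra H}

theorem exists_maximal_isOrthogonalFamily {Q : (H →L[ℂ] H) → Prop}
    (hQ : ∀ v, Q v → v ∈ M ∧ IsPartialIsometry v) :
    ∃ (S : Set (H →L[ℂ] H)) (V : H →L[ℂ] H), (∀ v ∈ S, Q v) ∧
      IsOrthogonalFamily M ((↑) : S → H →L[ℂ] H) ∧ HasStrongSum ((↑) : S → H →L[ℂ] H) V ∧
      ∀ v, Q v → star v * V = 0 → V * star v = 0 → v = 0 := by
  obtain ⟨S, -, hSQ, hSr, hmax⟩ := exists_maximal_pairwise (Q := Q) (S₀ := ∅)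
    (r := fun v w => star v * w = 0 ∧ v * star w = 0) (by simp) (by simp)
  have hfam : IsOrthogonalFamily M ((↑) : S → H →L[ℂ] H) :=
    ⟨fun v => (hQ v (hSQ v v.2)).1, fun v => (hQ v (hSQ v v.2)).2,
      fun v w hvw => (hSr v.2 w.2 (Subtype.coe_ne_coe.2 hvw)).1,
      fun v w hvw => (hSr v.2 w.2 (Subtype.coe_ne_coe.2 hvw)).2⟩
  obtain ⟨V, hV⟩ := hfam.exists_hasStrongSum
  refine ⟨S, V, hSQ, hfam, hV, fun v hv hvV hVv => ?_⟩
  have hleft (w : S) : star v * w = 0 := by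
    rw [← hfam.isPartialIsometry w, ← hfam.sum_mul_star hV w, ← mul_assoc, ← mul_assoc, hvV,
      zero_mul, zero_mul]
  have hright (w : S) : (w : H →L[ℂ] H) * star v = 0 := by
    rw [← hfam.isPartialIsometry w, mul_assoc (w : H →L[ℂ] H), ← hfam.star_mul_sum hV w, mul_assoc,
      mul_assoc, hVv, mul_zero, mul_zero]
  have hvS : v ∈ S := hmax v hv fun w hw _ =>
    ⟨⟨hleft ⟨w, hw⟩, by simpa using congrArg star (hright ⟨w, hw⟩)⟩,
      by simpa using congrArg star (hleft ⟨w, hw⟩), hright ⟨w, hw⟩⟩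
  exact eq_zero_of_star_mul_self_eq_zero (hleft ⟨v, hvS⟩)

theorem exists_isPartialIsometry_or_exists_isCentralProj {e f : H →L[ℂ] H} (he : IsProjIn M e)
    (hf : IsProjIn M f) : (∃ w, IsInCorner M f e w ∧ IsPartialIsometry w ∧ w ≠ 0) ∨
      ∃ z, IsCentralProj M z ∧ z * e = e ∧ z * f = 0 := by
  obtain ⟨z, hz, hze, hz_min⟩ := exists_isCentralProj_support he.1
  by_cases h : ∀ x ∈ M, f * x * e = 0
  · exact .inr ⟨z, hz, hze, (hz.2 f hf.1).trans (hz_min f h)⟩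
  · push Not at h
    obtain ⟨x, hx, hx0⟩ := h
    have hcorner : IsInCorner M f e (f * x * e) :=
      ⟨mul_mem (mul_mem hf.1 hx) he.1, by rw [← mul_assoc, ← mul_assoc, hf.mul_self],
        by rw [mul_assoc, he.mul_self]⟩
    exact .inl (hcorner.exists_isPartialIsometry_ne_zero he hf hx0)

end Maximality

section Copies

variable {M : VonNeumannAlgebra H} {e p v t x y : H →L[ℂ] H}

/-- `v ∈ M` is a partial isometry carrying the projection `e` onto a subprojection of `p`; for
`e = p` it is an isometry of the corner `p M p`. -/
structure IsCopy (M : VonNeumannAlgebra H) (e p v : H →L[ℂ] H) : Prop where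
  mem : v ∈ M
  star_mul_self : star v * v = e
  left : p * v = v

theorem IsCopy.isPartialIsometry (hv : IsCopy M e p v) (he : IsProjIn M e) : IsPartialIsometry v :=
  .of_isProjIn he hv.star_mul_self

theorem IsCopy.right (hv : IsCopy M e p v) (he : IsProjIn M e) : v * e = v := by
  rw [← hv.star_mul_self, ← mul_assoc, hv.isPartialIsometry he]

theorem IsCopy.star_left (hv : IsCopy M e p v) (hp : IsProjIn M p) : star v * p = star v := by
  simpa [hp.star_eq] using congrArg star hv.left

theorem IsCopy.star_mul_eq_zero {e' q w : H →L[ℂ] H} (hv : IsCopy M e p v) (hw : IsCopy M e' q w)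
    (hp : IsProjIn M p) (hpq : p * q = 0) : star v * w = 0 := by
  rw [← hv.star_left hp, ← hw.left, mul_assoc, ← mul_assoc p, hpq, zero_mul, mul_zero]

theorem IsCopy.mul_star_eq_zero {e' q w : H →L[ℂ] H} (hv : IsCopy M e p v) (hw : IsCopy M e' q w)
    (he : IsProjIn M e) (he' : IsProjIn M e') (hee' : e * e' = 0) : v * star w = 0 := by
  rw [← hv.right he, ← hw.right he', star_mul, he'.star_eq, mul_assoc, ← mul_assoc e, hee',
    zero_mul, mul_zero]

theorem IsCopy.mul {q : H →L[ℂ] H} (ht : IsCopy M p q t) (hv : IsCopy M e p v) :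
    IsCopy M e q (t * v) where
  mem := mul_mem ht.mem hv.mem
  star_mul_self := by
    rw [star_mul, mul_assoc, ← mul_assoc (star t), ht.star_mul_self, hv.left, hv.star_mul_self]
  left := by rw [← mul_assoc, ht.left]

theorem IsCopy.pow_mul (ht : IsCopy M p p t) (hv : IsCopy M e p v) (n : ℕ) :
    IsCopy M e p (t ^ n * v) := by
  induction n with
  | zero => rwa [pow_zero, one_mul]
  | succ n ih => rw [pow_succ', mul_assoc]; exact ht.mul ih

theorem IsCopy.star_pow_mul_mul_pow_mul (ht : IsCopy M p p t) (hy : p * y = y) (n : ℕ) :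
    star (t ^ n * x) * (t ^ n * y) = star x * y := by
  induction n generalizing x y with
  | zero => rw [pow_zero, one_mul, one_mul]
  | succ n ih =>
    rw [pow_succ, mul_assoc, mul_assoc, ih (by rw [← mul_assoc, ht.left]), star_mul, mul_assoc,
      ← mul_assoc (star t), ht.star_mul_self, hy]

theorem IsCopy.pairwise_star_pow_mul_mul_pow_mul (ht : IsCopy M p p t) (hx : p * x = x)
    (htx : star t * x = 0) : Pairwise fun m n => star (t ^ m * x) * (t ^ n * x) = 0 := by
  have hpow (k : ℕ) : p * (t ^ k * x) = t ^ k * x := by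
    cases k with
    | zero => rwa [pow_zero, one_mul]
    | succ k => rw [pow_succ', mul_assoc, ← mul_assoc, ht.left]
  have hxt : star x * t = 0 := by simpa using congrArg star htx
  have hlt {m n : ℕ} (hmn : m < n) : star (t ^ m * x) * (t ^ n * x) = 0 := by
    obtain ⟨k, rfl⟩ := Nat.exists_eq_add_of_lt hmn
    rw [add_assoc, pow_add, mul_assoc, ht.star_pow_mul_mul_pow_mul (hpow (k + 1)), pow_succ',
      mul_assoc, ← mul_assoc, hxt, zero_mul]
  intro m n hmn
  rcases hmn.lt_or_gt with h | h
  · exact hlt h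
  · simpa only [star_mul, star_star, star_zero] using congrArg star (hlt h)

end Copies

section OrthogonalProjections

variable {M : VonNeumannAlgebra H} {ι : Type*}

theorem IsOrthogonalFamily.isProjIn_sum {e : ι → H →L[ℂ] H} {E : H →L[ℂ] H}
    (h : IsOrthogonalFamily M e) (he : ∀ i, IsProjIn M (e i)) (hE : HasStrongSum e E) :
    IsProjIn M E := by
  have hsum := h.hasStrongSum_star_mul_self hE
  simp only [(he _).star_eq, (he _).mul_self] at hsum
  rw [hE.unique hsum]
  exact (h.isPartialIsometry_sum hE).isProjIn_star_mul_self (hE.mem h.mem)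

theorem exists_hasStrongSum_mul_star_self {v : ι → H →L[ℂ] H} (hv : ∀ i, v i ∈ M)
    (hpi : ∀ i, IsPartialIsometry (v i)) (horth : Pairwise fun i j => star (v i) * v j = 0) :
    ∃ E, IsProjIn M E ∧ HasStrongSum (fun i => v i * star (v i)) E ∧ ∀ i, E * v i = v i := by
  have hproj (i : ι) : IsProjIn M (v i * star (v i)) := (hpi i).isProjIn_mul_star_self (hv i)
  have hzero {i j : ι} (hij : i ≠ j) : v i * star (v i) * (v j * star (v j)) = 0 := by
    rw [mul_assoc, ← mul_assoc (star (v i)), horth hij, zero_mul, mul_zero]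
  have hfam : IsOrthogonalFamily M fun i => v i * star (v i) :=
    ⟨fun i => (hproj i).1, fun i => (hproj i).isPartialIsometry,
      fun i j hij => by simp only [(hproj _).star_eq, hzero hij],
      fun i j hij => by simp only [(hproj _).star_eq, hzero hij]⟩
  obtain ⟨E, hE⟩ := hfam.exists_hasStrongSum
  refine ⟨E, hfam.isProjIn_sum hproj hE, hE, fun i => ?_⟩
  have hsum := hE.mul_right (v i)
  have hi : v i * star (v i) * v i = v i := hpi i
  refine hsum.unique ?_
  convert HasStrongSum.single i fun j hj => ?_ using 1
  · exact hi.symm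
  · rw [mul_assoc, horth hj, mul_zero]

end OrthogonalProjections

section Paradoxical

variable {M : VonNeumannAlgebra H} {p : H →L[ℂ] H}

theorem IsCopy.exists_isProjIn_commute {s g : H →L[ℂ] H} (hs : IsCopy M p p s) (hp : IsProjIn M p)
    (hg : IsProjIn M g) (hpg : p * g = g) (hgs : g * s = s) :
    ∃ Q, IsProjIn M Q ∧ p * Q = Q ∧ Q * s = s * Q ∧ s * Q * star s = Q - (g - s * star s) := by
  have hss := (hs.isPartialIsometry hp).isProjIn_mul_star_self hs.mem
  let r := g - s * star s
  have hr : IsProjIn M r := hg.sub hss (by rw [← mul_assoc, hgs])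
  have hrs : r * s = 0 := by rw [sub_mul, hgs, hs.isPartialIsometry hp, sub_self]
  have hsr : star s * r = 0 := by simpa [hr.star_eq] using congrArg star hrs
  have hrc : IsCopy M r p r :=
    ⟨hr.1, by rw [hr.star_eq, hr.mul_self], by rw [mul_sub, hpg, ← mul_assoc, hs.left]⟩
  obtain ⟨Q, hQ, hQsum, -⟩ := exists_hasStrongSum_mul_star_self
    (fun n => (hs.pow_mul hrc n).mem) (fun n => (hs.pow_mul hrc n).isPartialIsometry hr)
    (hs.pairwise_star_pow_mul_mul_pow_mul hrc.left hsr)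
  have hpQ : p * Q = Q := hQsum.mul_left_eq_self fun n => by
    rw [← mul_assoc, (hs.pow_mul hrc n).left]
  have hQp : Q * p = Q := (hp.mul_eq_right_comm hQ).1 hpQ
  have hQ_eq : s * Q * star s = Q - r := by
    refine ((hQsum.mul_left s).mul_right (star s)).unique fun ξ => ?_
    have htail := (hasSum_nat_add_iff' 1).2 (hQsum ξ)
    simp only [Finset.range_one, Finset.sum_singleton, pow_zero, one_mul, hr.star_eq, hr.mul_self,
      ← sub_apply] at htail
    simpa only [pow_succ', star_mul, mul_assoc] using htail
  refine ⟨Q, hQ, hpQ, ?_, hQ_eq⟩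
  rw [← sub_add_cancel Q r, ← hQ_eq, add_mul, hrs, add_zero, mul_assoc, hs.star_mul_self,
    mul_assoc, hQp, hQ_eq, sub_add_cancel]

-- The Cantor–Schröder–Bernstein argument: the equivalence is `s` off `Q = ∑ sⁿ (g - s s*) s*ⁿ` and
-- the identity on `Q`.
theorem IsCopy.mvNEquiv {s g : H →L[ℂ] H} (hs : IsCopy M p p s) (hp : IsProjIn M p)
    (hg : IsProjIn M g) (hpg : p * g = g) (hgs : g * s = s) : MvNEquiv M p g := by
  obtain ⟨Q, hQ, hpQ, hQs, hsQs⟩ := hs.exists_isProjIn_commute hp hg hpg hgs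
  have hQp : Q * p = Q := (hp.mul_eq_right_comm hQ).1 hpQ
  have hpQ_proj : IsProjIn M (p - Q) := hp.sub hQ hpQ
  let u := s * (p - Q)
  have hu : star u * u = p - Q := by
    rw [star_mul, hpQ_proj.star_eq, mul_assoc, ← mul_assoc (star s), hs.star_mul_self,
      mul_sub p, hp.mul_self, hpQ, hpQ_proj.mul_self]
  have huu : u * star u = g - Q := by
    rw [star_mul, hpQ_proj.star_eq, mul_assoc, ← mul_assoc (p - Q), hpQ_proj.mul_self, ← mul_assoc,
      mul_sub, hs.right hp, sub_mul, hsQs]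
    abel
  have huQ : u * Q = 0 := by rw [mul_assoc, sub_mul, hpQ, hQ.mul_self, sub_self, mul_zero]
  have hQu : Q * u = 0 := by
    rw [← mul_assoc, hQs, mul_assoc, mul_sub, hQp, hQ.mul_self, sub_self, mul_zero]
  have huQ_star : Q * star u = 0 := by simpa [hQ.star_eq] using congrArg star huQ
  have hQu_star : star u * Q = 0 := by simpa [hQ.star_eq] using congrArg star hQu
  refine ⟨u + Q, add_mem (mul_mem hs.mem hpQ_proj.1) hQ.1, ?_, ?_⟩
  · rw [← star_eq_adjoint, star_add, hQ.star_eq, add_mul, mul_add, mul_add, hu, hQu_star, hQu,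
      hQ.mul_self, add_zero, zero_add, sub_add_cancel]
  · rw [← star_eq_adjoint, star_add, hQ.star_eq, add_mul, mul_add, mul_add, huu, huQ, huQ_star,
      hQ.mul_self, add_zero, zero_add, sub_add_cancel]

/-- `p M p` contains two isometries with orthogonal ranges, that is, `p` dominates two orthogonal
copies of itself. In contrast to `ProperlyInfiniteProj`, `p = 0` is allowed. -/
def IsParadoxical (M : VonNeumannAlgebra H) (p : H →L[ℂ] H) : Prop :=
  ∃ s t, IsCopy M p p s ∧ IsCopy M p p t ∧ star s * t = 0

theorem IsParadoxical.zero : IsParadoxical M 0 :=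
  have h0 : IsCopy M 0 0 0 := ⟨zero_mem M, mul_zero _, mul_zero _⟩
  ⟨0, 0, h0, h0, mul_zero _⟩

theorem mvNEquiv_comm {q : H →L[ℂ] H} : MvNEquiv M p q → MvNEquiv M q p := fun ⟨v, hv, h, h'⟩ =>
  ⟨star v, star_mem hv, by rwa [← star_eq_adjoint, star_star],
    by rwa [← star_eq_adjoint, star_star]⟩

theorem properlyInfiniteProj_of_hasStrongSum {w : ℕ → H →L[ℂ] H} (hp : IsProjIn M p) (h0 : p ≠ 0)
    (hw : ∀ n, IsCopy M p p (w n)) (horth : Pairwise fun m n => star (w m) * w n = 0)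
    (hsum : HasStrongSum (fun n => w n * star (w n)) p) : ProperlyInfiniteProj M p := by
  refine ⟨h0, fun n => w n * star (w n),
    fun n => ((hw n).isPartialIsometry hp).isProjIn_mul_star_self (hw n).mem, fun m n hmn => ?_,
    fun n => mvNEquiv_comm ⟨w n, (hw n).mem, (hw n).star_mul_self, rfl⟩, hsum⟩
  change w m * star (w m) * (w n * star (w n)) = 0
  rw [mul_assoc, ← mul_assoc (star (w m)), horth hmn, zero_mul, mul_zero]

theorem IsParadoxical.exists_seq_isCopy (h : IsParadoxical M p) :
    ∃ s, IsCopy M p p s ∧ ∃ v : ℕ → H →L[ℂ] H, (∀ n, IsCopy M p p (v n)) ∧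
      (Pairwise fun m n => star (v m) * v n = 0) ∧ ∀ n, star (v n) * s = 0 := by
  obtain ⟨s, t, hs, ht, hst⟩ := h
  have horth := ht.pairwise_star_pow_mul_mul_pow_mul hs.left (by simpa using congrArg star hst)
  refine ⟨s, hs, fun n => t ^ (n + 1) * s, fun n => ht.pow_mul hs (n + 1),
    fun m n hmn => horth (Nat.succ_injective.ne hmn), fun n => ?_⟩
  simpa only [pow_zero, one_mul] using horth n.succ_ne_zero

theorem IsParadoxical.properlyInfiniteProj (h : IsParadoxical M p) (hp : IsProjIn M p)
    (h0 : p ≠ 0) : ProperlyInfiniteProj M p := by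
  obtain ⟨s, hs, v, hv, hv_orth, hvs⟩ := h.exists_seq_isCopy
  obtain ⟨F, hF, hFsum, hFv⟩ := exists_hasStrongSum_mul_star_self (fun n => (hv n).mem)
    (fun n => (hv n).isPartialIsometry hp) hv_orth
  have hpF : p * F = F := hFsum.mul_left_eq_self fun n => by rw [← mul_assoc, (hv n).left]
  have hpF_proj : IsProjIn M (p - F) := hp.sub hF hpF
  have hFs : F * s = 0 := by
    refine hFsum.mul_right_eq_zero fun n => ?_
    rw [mul_assoc, hvs, mul_zero]
  -- `s` survives in `p - F`, which makes this remainder one more copy of `p`.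
  obtain ⟨y, hyM, hy, hyF⟩ := hs.mvNEquiv hp hpF_proj (by rw [mul_sub, hp.mul_self, hpF])
    (by rw [sub_mul, hs.left, hFs, sub_zero])
  have hy_left : (p - F) * y = y := by
    rw [← hyF]
    exact IsPartialIsometry.of_isProjIn hp hy
  have hpy : p * y = y := by
    rw [← hy_left, ← mul_assoc, mul_sub, hp.mul_self, hpF]
  have hyv (n : ℕ) : star y * v n = 0 := by
    have hy_star : star y * (p - F) = star y := by
      simpa [hpF_proj.star_eq] using congrArg star hy_left
    rw [← hy_star, mul_assoc, sub_mul, (hv n).left, hFv, sub_self, mul_zero]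
  let w : ℕ → H →L[ℂ] H := fun n => n.casesOn y v
  refine properlyInfiniteProj_of_hasStrongSum (w := w) hp h0 ?_ ?_ fun ξ => ?_
  · rintro (_ | n)
    exacts [⟨hyM, hy, hpy⟩, hv n]
  · rintro (_ | m) (_ | n) hmn
    · exact absurd rfl hmn
    · exact hyv n
    · have hvy : star (v m) * y = 0 := by simpa using congrArg star (hyv m)
      exact hvy
    · exact hv_orth (ne_of_apply_ne Nat.succ hmn)
  · have hsum := (hasSum_nat_add_iff (f := fun n => (w n * star (w n)) ξ) 1).1 (hFsum ξ)
    rw [Finset.range_one, Finset.sum_singleton, ← add_apply] at hsum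
    change HasSum _ ((F + y * star y) ξ) at hsum
    rwa [star_eq_adjoint, hyF, add_sub_cancel] at hsum

theorem IsCentralProj.of_hasStrongSum {ι : Type*} {z : ι → H →L[ℂ] H} {Z : H →L[ℂ] H}
    (hz : ∀ i, IsCentralProj M (z i)) (hZ : IsProjIn M Z) (hsum : HasStrongSum z Z) :
    IsCentralProj M Z :=
  ⟨hZ, fun x hx => (hsum.mul_right x).unique <| by
    simpa only [(hz _).2 x hx] using hsum.mul_left x⟩

theorem IsCentralProj.mul_mul_mul_eq_zero {z w : H →L[ℂ] H} (hw : IsCentralProj M w)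
    (hp : IsProjIn M p) (hzw : z * w = 0) : z * p * (w * p) = 0 := by
  rw [mul_assoc, ← mul_assoc p, ← hw.2 p hp.1, mul_assoc, hp.mul_self, ← mul_assoc, hzw, zero_mul]

theorem IsCopy.isOrthogonalFamily {ι : Type*} {z s : ι → H →L[ℂ] H} (hp : IsProjIn M p)
    (hz : ∀ i, IsCentralProj M (z i)) (hz_orth : Pairwise fun i j => z i * z j = 0)
    (hs : ∀ i, IsCopy M (z i * p) (z i * p) (s i)) : IsOrthogonalFamily M s :=
  have hzp (i : ι) : IsProjIn M (z i * p) := (hz i).isProjIn_mul hp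
  ⟨fun i => (hs i).mem, fun i => (hs i).isPartialIsometry (hzp i),
    fun i j hij => (hs i).star_mul_eq_zero (hs j) (hzp i)
      ((hz j).mul_mul_mul_eq_zero hp (hz_orth hij)),
    fun i j hij => (hs i).mul_star_eq_zero (hs j) (hzp i) (hzp j)
      ((hz j).mul_mul_mul_eq_zero hp (hz_orth hij))⟩

theorem IsCopy.of_hasStrongSum {ι : Type*} {z s : ι → H →L[ℂ] H} {S : H →L[ℂ] H}
    (hp : IsProjIn M p) (hz : ∀ i, IsCentralProj M (z i)) (hz_sum : HasStrongSum z 1)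
    (hs : ∀ i, IsCopy M (z i * p) (z i * p) (s i)) (hfam : IsOrthogonalFamily M s)
    (hS : HasStrongSum s S) : IsCopy M p p S where
  mem := hS.mem hfam.mem
  star_mul_self := (hfam.hasStrongSum_star_mul_self hS).unique <| by
    simpa only [(hs _).star_mul_self, one_mul] using hz_sum.mul_right p
  left := hS.mul_left_eq_self fun i => by
    rw [← (hs i).left, ← mul_assoc, (hz i).2 p hp.1, ← mul_assoc, hp.mul_self]

theorem IsParadoxical.of_hasStrongSum {ι : Type*} {z : ι → H →L[ℂ] H} (hp : IsProjIn M p)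
    (hz : ∀ i, IsCentralProj M (z i)) (hz_orth : Pairwise fun i j => z i * z j = 0)
    (hz_sum : HasStrongSum z 1) (h : ∀ i, IsParadoxical M (z i * p)) : IsParadoxical M p := by
  choose s t hs ht hst using h
  have hfam_s := IsCopy.isOrthogonalFamily hp hz hz_orth hs
  have hfam_t := IsCopy.isOrthogonalFamily hp hz hz_orth ht
  obtain ⟨S, hS⟩ := hfam_s.exists_hasStrongSum
  obtain ⟨T, hT⟩ := hfam_t.exists_hasStrongSum
  refine ⟨S, T, .of_hasStrongSum hp hz hz_sum hs hfam_s hS,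
    .of_hasStrongSum hp hz hz_sum ht hfam_t hT, hT.mul_left_eq_zero fun i => ?_⟩
  refine (hfam_s.hasStrongSum_star hS).mul_right_eq_zero fun j => ?_
  rcases eq_or_ne j i with rfl | hji
  · exact hst j
  · exact (hs j).star_mul_eq_zero (ht i) ((hz j).isProjIn_mul hp)
      ((hz i).mul_mul_mul_eq_zero hp (hz_orth hji))

theorem IsParadoxical.of_forall_isCentralProj (hp : IsProjIn M p)
    (h : ∀ z, IsCentralProj M z → z ≠ 0 →
      ∃ w, IsCentralProj M w ∧ w ≠ 0 ∧ z * w = w ∧ IsParadoxical M (w * p)) :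
    IsParadoxical M p := by
  obtain ⟨C, Z, hC, hfam, hZ, hmax⟩ := exists_maximal_isOrthogonalFamily (M := M)
    (Q := fun z => IsCentralProj M z ∧ IsParadoxical M (z * p))
    fun z hz => ⟨hz.1.1.1, hz.1.1.isPartialIsometry⟩
  have hC' (z : C) : IsCentralProj M z := (hC z z.2).1
  have hZ_central : IsCentralProj M Z :=
    .of_hasStrongSum hC' (hfam.isProjIn_sum (fun z => (hC' z).1) hZ) hZ
  have hZ_one : Z = 1 := by
    by_contra hne
    obtain ⟨w, hw, hw0, hZw, hwp⟩ := h (1 - Z) hZ_central.one_sub (sub_ne_zero.2 (Ne.symm hne))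
    have hZw0 : Z * w = 0 := by rwa [sub_mul, one_mul, sub_eq_self] at hZw
    refine hw0 (hmax w ⟨hw, hwp⟩ ?_ ?_)
    · rw [hw.1.star_eq, hw.2 Z hZ_central.1.1, hZw0]
    · rw [hw.1.star_eq, hZw0]
  refine .of_hasStrongSum (z := ((↑) : C → H →L[ℂ] H)) hp hC' (fun z w hzw => ?_) (hZ_one ▸ hZ)
    fun z => (hC z z.2).2
  have horth : star (z : H →L[ℂ] H) * w = 0 := hfam.star_mul hzw
  rw [(hC' z).1.star_eq] at horth
  exact horth

end Paradoxical

section Splitting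

variable {M : VonNeumannAlgebra H} {e f p : H →L[ℂ] H}

theorem IsCentralProj.star_mul_eq {z x : H →L[ℂ] H} (hz : IsCentralProj M z) (hx : x ∈ M) :
    star (z * x) = z * star x := by
  rw [hz.2 x hx, star_mul, hz.1.star_eq]

theorem IsCentralProj.mul_mul_mul {z x : H →L[ℂ] H} (hz : IsCentralProj M z) (hx : x ∈ M)
    (y : H →L[ℂ] H) : z * x * (z * y) = z * (x * y) := by
  rw [hz.2 x hx, mul_assoc, ← mul_assoc z, hz.1.mul_self, ← mul_assoc, ← hz.2 x hx, mul_assoc]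

theorem IsCentralProj.isPartialIsometry_mul {z v : H →L[ℂ] H} (hz : IsCentralProj M z)
    (hv : v ∈ M) (hvi : IsPartialIsometry v) : IsPartialIsometry (z * v) := by
  rw [IsPartialIsometry, hz.star_mul_eq hv, hz.mul_mul_mul hv,
    hz.mul_mul_mul (mul_mem hv (star_mem hv)), hvi]

theorem IsInCorner.star_mul_self_mul {v : H →L[ℂ] H} (hv : IsInCorner M f e v)
    (he : IsProjIn M e) : e * (star v * v) = star v * v := by
  have hstar : e * star v = star v := by simpa [he.star_eq] using congrArg star hv.right
  rw [← mul_assoc, hstar]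

theorem IsInCorner.isProjIn_sub_star_mul_self {v : H →L[ℂ] H} (hv : IsInCorner M f e v)
    (hvi : IsPartialIsometry v) (he : IsProjIn M e) : IsProjIn M (e - star v * v) :=
  he.sub (hvi.isProjIn_star_mul_self hv.mem) (hv.star_mul_self_mul he)

theorem IsInCorner.isProjIn_sub_mul_star_self {v : H →L[ℂ] H} (hv : IsInCorner M f e v)
    (hvi : IsPartialIsometry v) (hf : IsProjIn M f) : IsProjIn M (f - v * star v) :=
  hf.sub (hvi.isProjIn_mul_star_self hv.mem) (by rw [← mul_assoc, hv.left])

theorem IsInCorner.of_sub {v w : H →L[ℂ] H} (hv : IsInCorner M f e v) (hvi : IsPartialIsometry v)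
    (he : IsProjIn M e) (hf : IsProjIn M f)
    (hw : IsInCorner M (f - v * star v) (e - star v * v) w) :
    IsInCorner M f e w ∧ star w * v = 0 ∧ v * star w = 0 := by
  have hv' : v * star v * v = v := hvi
  have he' := hv.isProjIn_sub_star_mul_self hvi he
  have hf' := hv.isProjIn_sub_mul_star_self hvi hf
  refine ⟨⟨hw.mem, ?_, ?_⟩, ?_, ?_⟩
  · rw [← hw.left, ← mul_assoc, mul_sub, hf.mul_self, ← mul_assoc, hv.left]
  · rw [← hw.right, mul_assoc, sub_mul, he.mul_self,
      (he.mul_eq_right_comm (hvi.isProjIn_star_mul_self hv.mem)).1 (hv.star_mul_self_mul he)]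
  · rw [← (hw.star he' hf').right, mul_assoc, sub_mul, hv.left, hv', sub_self, mul_zero]
  · rw [← (hw.star he' hf').left, ← mul_assoc, mul_sub, hv.right, ← mul_assoc, hv', sub_self,
      zero_mul]

theorem exists_isCentralProj_comparison (he : IsProjIn M e) (hf : IsProjIn M f) :
    ∃ z V, IsCentralProj M z ∧ IsInCorner M f e V ∧ IsPartialIsometry V ∧
      z * (e - star V * V) = e - star V * V ∧ z * (f - V * star V) = 0 := by
  obtain ⟨S, V, hS, hfam, hV, hmax⟩ := exists_maximal_isOrthogonalFamily (M := M)
    (Q := fun v => IsInCorner M f e v ∧ IsPartialIsometry v) fun v hv => ⟨hv.1.mem, hv.2⟩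
  have hVi := hfam.isPartialIsometry_sum hV
  have hVc : IsInCorner M f e V := ⟨hV.mem hfam.mem, hV.mul_left_eq_self fun v => (hS v v.2).1.left,
    (hV.mul_right e).unique (by simpa only [(hS _ (Subtype.prop _)).1.right] using hV)⟩
  rcases exists_isPartialIsometry_or_exists_isCentralProj (hVc.isProjIn_sub_star_mul_self hVi he)
    (hVc.isProjIn_sub_mul_star_self hVi hf) with ⟨w, hw, hwi, hw0⟩ | ⟨z, hz, hze, hzf⟩
  · obtain ⟨hwc, hwV, hVw⟩ := hVc.of_sub hVi he hf hw
    exact absurd (hmax w ⟨hwc, hwi⟩ hwV hVw) hw0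
  · exact ⟨z, V, hz, hVc, hVi, hze, hzf⟩

/-- The projection `p` is the sum of the pieces `(a i)* (a i)`, each carried by the partial isometry
`a i` into `e`; all pieces are copies of `e` except the one with index `Sum.inr ()`. -/
structure IsSplitting {ι : Type*} (M : VonNeumannAlgebra H) (e p : H →L[ℂ] H)
    (a : ι ⊕ Unit → H →L[ℂ] H) : Prop where
  mem : ∀ i, a i ∈ M
  isPartialIsometry : ∀ i, IsPartialIsometry (a i)
  left : ∀ i, e * a i = a i
  mul_star : Pairwise fun i j => a i * star (a j) = 0
  mul_star_self : ∀ i, a (.inl i) * star (a (.inl i)) = e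
  hasStrongSum : HasStrongSum (fun i => star (a i) * a i) p

theorem IsSplitting.mul_star_eq {ι : Type*} {a : ι ⊕ Unit → H →L[ℂ] H} (ha : IsSplitting M e p a)
    (i : ι ⊕ Unit) : p * star (a i) = star (a i) := by
  have hi : star (a i) * a i * star (a i) = star (a i) := by
    simpa [mul_assoc] using congrArg star (ha.isPartialIsometry i)
  refine (ha.hasStrongSum.mul_right (star (a i))).unique ?_
  convert HasStrongSum.single i fun j hj => ?_ using 1
  · exact hi.symm
  · rw [mul_assoc, ha.mul_star hj, mul_zero]

theorem IsSplitting.of_star {ι : Type*} {b : ι ⊕ Unit → H →L[ℂ] H} {z F : H →L[ℂ] H}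
    (hz : IsCentralProj M z) (he : IsProjIn M e) (hb : ∀ i, b i ∈ M)
    (hbi : ∀ i, IsPartialIsometry (b i)) (hright : ∀ i, b i * e = b i)
    (horth : Pairwise fun i j => star (b i) * b j = 0)
    (hstar : ∀ i, star (b (.inl i)) * b (.inl i) = e)
    (hsum : HasStrongSum (fun i => b i * star (b i)) F) (hF : z * F = z * p) :
    IsSplitting M (z * e) (z * p) fun i => z * star (b i) := by
  have mul_star (i j : ι ⊕ Unit) : z * star (b i) * star (z * star (b j)) =
      z * (star (b i) * b j) := by
    rw [hz.star_mul_eq (star_mem (hb j)), star_star, hz.mul_mul_mul (star_mem (hb i))]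
  refine ⟨fun i => mul_mem hz.1.1 (star_mem (hb i)),
    fun i => hz.isPartialIsometry_mul (star_mem (hb i)) (hbi i).star, fun i => ?_,
    fun i j hij => ?_, fun i => ?_, ?_⟩
  · rw [hz.mul_mul_mul he.1]
    simpa [he.star_eq] using congrArg (z * star ·) (hright i)
  · change z * star (b i) * star (z * star (b j)) = 0
    rw [mul_star, horth hij, mul_zero]
  · rw [mul_star, hstar]
  · have hterm (i : ι ⊕ Unit) :
        star (z * star (b i)) * (z * star (b i)) = z * (b i * star (b i)) := by
      rw [hz.star_mul_eq (star_mem (hb i)), star_star, hz.mul_mul_mul (hb i)]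
    simp only [hterm, ← hF]
    exact hsum.mul_left z

theorem exists_maximal_isCopy (he : IsProjIn M e) {S₀ : Set (H →L[ℂ] H)}
    (hS₀ : ∀ v ∈ S₀, IsCopy M e p v) (horth : S₀.Pairwise fun v w => star v * w = 0) :
    ∃ (S : Set (H →L[ℂ] H)) (F : H →L[ℂ] H), S₀ ⊆ S ∧ (∀ v ∈ S, IsCopy M e p v) ∧
      (S.Pairwise fun v w => star v * w = 0) ∧ IsProjIn M F ∧ p * F = F ∧
      HasStrongSum (fun v : S => (v : H →L[ℂ] H) * star (v : H →L[ℂ] H)) F ∧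
      (∀ v ∈ S, F * v = v) ∧
      ∀ v, IsCopy M e p v → F * v = 0 → v = 0 := by
  obtain ⟨S, hS₀S, hS, hSorth, hmax⟩ := exists_maximal_pairwise hS₀ horth
  obtain ⟨F, hF, hFsum, hFv⟩ := exists_hasStrongSum_mul_star_self (v := ((↑) : S → H →L[ℂ] H))
    (fun v => (hS v v.2).mem) (fun v => (hS v v.2).isPartialIsometry he)
    fun v w hvw => hSorth v.2 w.2 (Subtype.coe_ne_coe.2 hvw)
  have hpF : p * F = F := hFsum.mul_left_eq_self fun v => by rw [← mul_assoc, (hS v v.2).left]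
  refine ⟨S, F, hS₀S, hS, hSorth, hF, hpF, hFsum, fun v hv => hFv ⟨v, hv⟩, fun v hv hv0 => ?_⟩
  have hzero (w : H →L[ℂ] H) (hw : w ∈ S) : star w * v = 0 := by
    have hFw : F * w = w := hFv ⟨w, hw⟩
    rw [← hFw, star_mul, hF.star_eq, mul_assoc, hv0, mul_zero]
  refine (hFv ⟨v, hmax v hv fun w hw _ => ⟨?_, hzero w hw⟩⟩).symm.trans hv0
  simpa using congrArg star (hzero w hw)

-- `S` is a maximal orthogonal family of copies of `e` in `p`; the last piece of the splitting comes
-- from comparing `e` with what they leave over.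
theorem exists_isSplitting_of_isCopy (he : IsProjIn M e) (h0 : e ≠ 0) (hp : IsProjIn M p)
    {S₀ : Set (H →L[ℂ] H)} (hS₀ : ∀ v ∈ S₀, IsCopy M e p v)
    (horth : S₀.Pairwise fun v w => star v * w = 0) :
    ∃ S ⊇ S₀, (∀ v ∈ S, IsCopy M e p v) ∧ (S.Pairwise fun v w => star v * w = 0) ∧
      ∃ z, IsCentralProj M z ∧ z * e ≠ 0 ∧
        ∃ a : S ⊕ Unit → H →L[ℂ] H, IsSplitting M (z * e) (z * p) a := by
  obtain ⟨S, F, hS₀S, hS, hSorth, hF, hpF, hFsum, hFv, hmax⟩ := exists_maximal_isCopy he hS₀ horth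
  obtain ⟨z, V, hz, hV, hVi, hze, hzr⟩ := exists_isCentralProj_comparison he (hp.sub hF hpF)
  have hFV : F * V = 0 := by
    rw [← hV.left, ← mul_assoc, mul_sub, (hp.mul_eq_right_comm hF).1 hpF, hF.mul_self, sub_self,
      zero_mul]
  have hpV : p * V = V := by
    rw [← hV.left, ← mul_assoc, mul_sub, hp.mul_self, hpF]
  refine ⟨S, hS₀S, hS, hSorth, z, hz, fun hze0 => h0 ?_, ?_⟩
  · have heV : e = star V * V := by
      rw [← sub_eq_zero, ← hze, ← hV.star_mul_self_mul he, mul_sub, ← mul_assoc, hze0, zero_mul,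
        sub_zero]
    rw [heV, hmax V ⟨hV.mem, heV.symm, hpV⟩ hFV, mul_zero]
  have hvV {v : H →L[ℂ] H} (hv : v ∈ S) : star v * V = 0 := by
    rw [← hFv v hv, star_mul, hF.star_eq, mul_assoc, hFV, mul_zero]
  have hVv {v : H →L[ℂ] H} (hv : v ∈ S) : star V * v = 0 := by
    simpa using congrArg star (hvV hv)
  let b : S ⊕ Unit → H →L[ℂ] H := Sum.elim (↑) fun _ => V
  have hb_orth : Pairwise fun i j => star (b i) * b j = 0 := by
    rintro (v | ⟨⟩) (w | ⟨⟩) hij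
    exacts [hSorth v.2 w.2 (Subtype.coe_ne_coe.2 (ne_of_apply_ne Sum.inl hij)), hvV v.2, hVv w.2,
      absurd rfl hij]
  refine ⟨_, .of_star (b := b) (F := F + V * star V) hz he ?_ ?_ ?_ hb_orth
    (fun v => (hS v v.2).star_mul_self) (fun ξ => ?_) ?_⟩
  · rintro (v | _)
    exacts [(hS v v.2).mem, hV.mem]
  · rintro (v | _)
    exacts [(hS v v.2).isPartialIsometry he, hVi]
  · rintro (v | _)
    exacts [(hS v v.2).right he, hV.right]
  · have hunit : HasSum (fun _ : Unit => (V * star V) ξ) ((V * star V) ξ) := hasSum_unique _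
    exact HasSum.sum (f := fun i => (b i * star (b i)) ξ) (hFsum ξ) hunit
  · rw [← sub_eq_zero, ← mul_sub, ← neg_eq_zero, ← mul_neg, neg_sub, ← sub_sub, hzr]

/-- `p` is finite: no nonzero projection has infinitely many pairwise orthogonal copies in `p`. -/
def HasFiniteCopies (M : VonNeumannAlgebra H) (p : H →L[ℂ] H) : Prop :=
  ∀ e, IsProjIn M e → e ≠ 0 → ∀ v : ℕ → H →L[ℂ] H, (∀ n, IsCopy M e p (v n)) →
    ¬Pairwise fun m n => star (v m) * v n = 0

theorem HasFiniteCopies.mul_star_eq {q u : H →L[ℂ] H} (h : HasFiniteCopies M p)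
    (hq : IsProjIn M q) (hpq : p * q = q) (hu : IsCopy M q q u) : u * star u = q := by
  have hui := hu.isPartialIsometry hq
  have hr : IsProjIn M (q - u * star u) :=
    hq.sub (hui.isProjIn_mul_star_self hu.mem) (by rw [← mul_assoc, hu.left])
  have hqr : q * (q - u * star u) = q - u * star u := by
    rw [mul_sub, hq.mul_self, ← mul_assoc, hu.left]
  have hur : star u * (q - u * star u) = 0 := by
    have hqu : q * star u = star u := by simpa [hq.star_eq] using congrArg star (hu.right hq)
    rw [mul_sub, hu.star_left hq, ← mul_assoc, hu.star_mul_self, hqu, sub_self]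
  have hrc : IsCopy M (q - u * star u) q (q - u * star u) :=
    ⟨hr.1, by rw [hr.star_eq, hr.mul_self], hqr⟩
  by_contra hne
  exact h _ hr (sub_ne_zero.2 (Ne.symm hne)) _
    (fun n => ⟨(hu.pow_mul hrc n).mem, (hu.pow_mul hrc n).star_mul_self, by
      rw [← (hu.pow_mul hrc n).left, ← mul_assoc, hpq]⟩)
    (hu.pairwise_star_pow_mul_mul_pow_mul hqr hur)

theorem exists_embedding_sum_unit_sum {ι : Type*} [Infinite ι] :
    Nonempty ((ι ⊕ Unit) ⊕ (ι ⊕ Unit) ↪ ι) := by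
  rw [← Cardinal.le_def]
  simp

namespace IsSplitting

variable {ι : Type*} {a : ι ⊕ Unit → H →L[ℂ] H} {g g' : ι ⊕ Unit → ι} {s t : H →L[ℂ] H}

theorem mul_star_mul (ha : IsSplitting M e p a) (k : ι) (i : ι ⊕ Unit) :
    a (.inl k) * (star (a (.inl k)) * a i) = a i := by
  rw [← mul_assoc, ha.mul_star_self, ha.left]

theorem star_mul_mul_star_mul (ha : IsSplitting M e p a) {k l : ι} (hkl : k ≠ l)
    (i j : ι ⊕ Unit) : star (star (a (.inl k)) * a i) * (star (a (.inl l)) * a j) = 0 := by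
  rw [star_mul, star_star, mul_assoc, ← mul_assoc (a (.inl k)),
    ha.mul_star (Sum.inl_injective.ne hkl), zero_mul, mul_zero]

theorem isOrthogonalFamily (ha : IsSplitting M e p a) (hg : g.Injective) :
    IsOrthogonalFamily M fun i => star (a (.inl (g i))) * a i := by
  refine ⟨fun i => mul_mem (star_mem (ha.mem _)) (ha.mem i), fun i => ?_,
    fun i j hij => ha.star_mul_mul_star_mul (hg.ne hij) i j, fun i j hij => ?_⟩
  · refine .of_isProjIn ((ha.isPartialIsometry i).isProjIn_star_mul_self (ha.mem i)) ?_
    rw [star_mul, star_star, mul_assoc, ha.mul_star_mul]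
  · change star (a (.inl (g i))) * a i * star (star (a (.inl (g j))) * a j) = 0
    rw [star_mul, star_star, mul_assoc, ← mul_assoc (a i), ha.mul_star hij, zero_mul, mul_zero]

theorem isCopy (ha : IsSplitting M e p a) (hg : g.Injective)
    (hs : HasStrongSum (fun i => star (a (.inl (g i))) * a i) s) : IsCopy M p p s where
  mem := hs.mem (ha.isOrthogonalFamily hg).mem
  star_mul_self := ((ha.isOrthogonalFamily hg).hasStrongSum_star_mul_self hs).unique <| by
    simpa only [star_mul, star_star, mul_assoc, ha.mul_star_mul] using ha.hasStrongSum
  left := hs.mul_left_eq_self fun i => by rw [← mul_assoc, ha.mul_star_eq]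

theorem isParadoxical [Infinite ι] (ha : IsSplitting M e p a) : IsParadoxical M p := by
  obtain ⟨g⟩ := exists_embedding_sum_unit_sum (ι := ι)
  have hgl := g.injective.comp Sum.inl_injective
  have hgr := g.injective.comp Sum.inr_injective
  obtain ⟨s, hs⟩ := (ha.isOrthogonalFamily hgl).exists_hasStrongSum
  obtain ⟨t, ht⟩ := (ha.isOrthogonalFamily hgr).exists_hasStrongSum
  refine ⟨s, t, ha.isCopy hgl hs, ha.isCopy hgr ht, ht.mul_left_eq_zero fun j => ?_⟩
  exact ((ha.isOrthogonalFamily hgl).hasStrongSum_star hs).mul_right_eq_zero fun i =>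
    ha.star_mul_mul_star_mul (g.injective.ne Sum.inl_ne_inr) i j

end IsSplitting

theorem exists_isParadoxical_of_not_hasFiniteCopies (hp : IsProjIn M p)
    (h : ¬HasFiniteCopies M p) :
    ∃ z, IsCentralProj M z ∧ z * p ≠ 0 ∧ IsParadoxical M (z * p) := by
  simp only [HasFiniteCopies, not_forall, not_not] at h
  obtain ⟨e, he, he0, v, hv, hv_orth⟩ := h
  have hv_inj : v.Injective := fun m n hmn => by
    by_contra hne
    have hzero : star (v m) * v n = 0 := hv_orth hne
    exact he0 (by rw [← (hv n).star_mul_self, ← hzero, hmn])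
  obtain ⟨S, hS₀S, -, -, z, hz, hze, a, ha⟩ :=
    exists_isSplitting_of_isCopy (S₀ := Set.range v) he he0 hp
    (Set.forall_mem_range.2 hv) (by
      rintro _ ⟨m, rfl⟩ _ ⟨n, rfl⟩ hmn
      exact hv_orth (ne_of_apply_ne v hmn))
  have : Infinite S := (Set.infinite_range_of_injective hv_inj |>.mono hS₀S).to_subtype
  refine ⟨z, hz, fun hzp => hze ?_, ha.isParadoxical⟩
  have hzv : z * v 0 = 0 := by rw [← (hv 0).left, ← mul_assoc, hzp, zero_mul]
  rw [← (hv 0).star_mul_self, ← mul_assoc, hz.2 _ (star_mem (hv 0).mem), mul_assoc, hzv, mul_zero]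

theorem HasFiniteCopies.exists_isSplitting (h : HasFiniteCopies M p) (hp : IsProjIn M p)
    (he : IsProjIn M e) (he0 : e ≠ 0) (hpe : p * e = e) :
    ∃ z, IsCentralProj M z ∧ z * e ≠ 0 ∧ ∃ (ι : Type u) (_ : Finite ι) (_ : Nonempty ι)
      (a : ι ⊕ Unit → H →L[ℂ] H), IsSplitting M (z * e) (z * p) a := by
  have hec : IsCopy M e p e := ⟨he.1, by rw [he.star_eq, he.mul_self], hpe⟩
  obtain ⟨S, hS₀S, hS, hSorth, z, hz, hze, a, ha⟩ :=
    exists_isSplitting_of_isCopy (S₀ := {e}) he he0 hp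
    (by simpa using hec) (Set.pairwise_singleton _ _)
  refine ⟨z, hz, hze, S, ?_, ⟨e, hS₀S rfl⟩, a, ha⟩
  by_contra hinf
  rw [not_finite_iff_infinite] at hinf
  let v := Infinite.natEmbedding S
  exact h e he he0 (fun n => v n) (fun n => hS _ (v n).2) fun m n hmn =>
    hSorth (v m).2 (v n).2 (Subtype.coe_ne_coe.2 (v.injective.ne hmn))

end Splitting

section VectorDomination

variable {M : VonNeumannAlgebra H} {p : H →L[ℂ] H}

theorem HasFiniteCopies.star_mul_self_eq_and_mul_star_self_eq {R V z : H →L[ℂ] H}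
    (h : HasFiniteCopies M p) (hR : IsProjIn M R) (hpR : p * R = R) (hV : IsInCorner M R R V)
    (hz : IsCentralProj M z) (hze : z * (R - star V * V) = R - star V * V)
    (hzf : z * (R - V * star V) = 0) : star V * V = R ∧ V * star V = R := by
  have hV_star := hV.star hR hR
  have hcopy : IsCopy M (z * R) (z * R) (z * star V) := by
    refine ⟨mul_mem hz.1.1 hV_star.mem, ?_, ?_⟩
    · rw [hz.star_mul_eq hV_star.mem, star_star, hz.mul_mul_mul hV.mem]
      rw [mul_sub, sub_eq_zero] at hzf
      exact hzf.symm
    · rw [hz.mul_mul_mul hR.1, hV_star.left]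
  have hzV := h.mul_star_eq (hz.isProjIn_mul hR)
    (by rw [hz.2 R hR.1, ← mul_assoc, hpR]) hcopy
  rw [hz.star_mul_eq hV_star.mem, star_star, hz.mul_mul_mul hV_star.mem] at hzV
  have hVV : star V * V = R := by
    rw [← sub_eq_zero, ← neg_eq_zero, neg_sub, ← hze, mul_sub, hzV, sub_self]
  exact ⟨hVV, h.mul_star_eq hR hpR ⟨hV.mem, hVV, hV.left⟩⟩

theorem exists_maximal_two_mul_norm_star_apply_le {R : H →L[ℂ] H} (ξ : H) :
    ∃ V, IsInCorner M R R V ∧ IsPartialIsometry V ∧ 2 * ‖star V ξ‖ ≤ ‖V ξ‖ ∧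
      ∀ v, IsInCorner M R R v → IsPartialIsometry v → star v * V = 0 → V * star v = 0 →
        ‖v ξ‖ ≤ ‖star v ((2 : ℂ) • ξ)‖ := by
  obtain ⟨S, V, hS, hfam, hV, hmax⟩ := exists_maximal_isOrthogonalFamily (M := M)
    (Q := fun v => IsInCorner M R R v ∧ IsPartialIsometry v ∧ 2 * ‖star v ξ‖ ≤ ‖v ξ‖)
    fun v hv => ⟨hv.1.mem, hv.2.1⟩
  have hright (v : S) : (v : H →L[ℂ] H) * R = v := (hS v v.2).1.right
  have hVξ := (hfam.hasStrongSum_star_mul_self hV).hasSum_norm_sq ξ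
  have hVξ_star :=
    (hfam.star.hasStrongSum_star_mul_self (hfam.hasStrongSum_star hV)).hasSum_norm_sq ξ
  have hle : 2 ^ 2 * ‖star V ξ‖ ^ 2 ≤ ‖V ξ‖ ^ 2 := by
    refine hasSum_le (fun v => ?_) (hVξ_star.mul_left (2 ^ 2)) hVξ
    rw [← mul_pow]
    exact pow_le_pow_left₀ (by positivity) (hS v v.2).2.2 2
  refine ⟨V, ⟨hV.mem hfam.mem, hV.mul_left_eq_self fun v => (hS v v.2).1.left,
    (hV.mul_right R).unique (by simpa only [hright] using hV)⟩, hfam.isPartialIsometry_sum hV,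
    (sq_le_sq₀ (by positivity) (norm_nonneg _)).1 (by rwa [mul_pow]), fun v hv hvi hvV hVv => ?_⟩
  rw [map_smul, norm_smul, Complex.norm_two]
  by_contra! hlt
  rw [hmax v ⟨hv, hvi, hlt.le⟩ hvV hVv, zero_apply, star_zero, zero_apply, norm_zero, mul_zero]
    at hlt
  exact lt_irrefl _ hlt

theorem IsInCorner.norm_apply_le_of_isInCorner_star_mul_self {e f w y : H →L[ℂ] H} {ξ η : H}
    (hw : IsInCorner M f e w) (he : IsProjIn M e) (hf : IsProjIn M f)
    (h : ∀ u, IsInCorner M f e u → IsPartialIsometry u → ‖u ξ‖ ≤ ‖star u η‖)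
    (hy : IsInCorner M (star w * w) (star w * w) y) :
    ‖y ξ‖ ≤ ‖star y (star w η)‖ := by
  have hwy : IsInCorner M f e (w * y) :=
    ⟨mul_mem hw.mem hy.mem, by rw [← mul_assoc, hw.left],
      by rw [← hy.right, mul_assoc, mul_assoc, mul_assoc, hw.right]⟩
  have hnorm : ‖y ξ‖ = ‖(w * y) ξ‖ := norm_apply_eq_of_star_mul_self_eq (by
    rw [star_mul, mul_assoc, ← mul_assoc (star w), hy.left]) ξ
  rw [hnorm, ← mul_apply_eq_comp, ← star_mul]
  exact hwy.norm_apply_le_norm_star_apply he hf h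

theorem HasFiniteCopies.exists_norm_apply_le_norm_star_apply (h : HasFiniteCopies M p)
    (hp : IsProjIn M p) (h0 : p ≠ 0) :
    ∃ e, ∃ ξ η : H, IsProjIn M e ∧ e ≠ 0 ∧ p * e = e ∧ (∀ q ∈ M, q ξ = 0 → q * e = 0) ∧
      ∀ y, IsInCorner M e e y → ‖y ξ‖ ≤ ‖star y η‖ := by
  obtain ⟨η₀, hη₀⟩ : ∃ η₀, p η₀ ≠ 0 := by
    by_contra! hzero
    exact h0 (ContinuousLinearMap.ext hzero)
  let ξ := p η₀
  obtain ⟨R, hR, hRξ, hR_min⟩ := exists_isProjIn_vector_support M ξ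
  have hpR : p * R = R := by
    have hpξ : (1 - p) ξ = 0 := by
      rw [← mul_apply_eq_comp, hp.isStarProjection.one_sub_mul_self, zero_apply]
    have hpR0 := hR_min _ hp.one_sub.1 hpξ
    rw [sub_mul, one_mul, sub_eq_zero] at hpR0
    exact hpR0.symm
  obtain ⟨V, hV, hVi, hVξ, hmax⟩ := exists_maximal_two_mul_norm_star_apply_le (M := M) (R := R) ξ
  have he := hV.isProjIn_sub_star_mul_self hVi hR
  have hf := hV.isProjIn_sub_mul_star_self hVi hR
  rcases exists_isPartialIsometry_or_exists_isCentralProj he hf with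
    ⟨w, hw, hwi, hw0⟩ | ⟨z, hz, hze, hzf⟩
  · have hRw : R * (star w * w) = star w * w :=
      (hV.of_sub hVi hR hR hw).1.star_mul_self_mul hR
    refine ⟨star w * w, ξ, star w ((2 : ℂ) • ξ), hwi.isProjIn_star_mul_self hw.mem,
      fun hzero => hw0 (eq_zero_of_star_mul_self_eq_zero hzero), ?_, fun q hq hqξ => ?_,
      fun y hy => hw.norm_apply_le_of_isInCorner_star_mul_self he hf (fun u hu hui => ?_) hy⟩
    · rw [← hRw, ← mul_assoc, hpR]
    · rw [← hRw, ← mul_assoc, hR_min q hq hqξ, zero_mul]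
    · obtain ⟨huc, huV, hVu⟩ := hV.of_sub hVi hR hR hu
      exact hmax u huc hui huV hVu
  · obtain ⟨hVV, hVV_star⟩ :=
      h.star_mul_self_eq_and_mul_star_self_eq hR hpR hV hz hze hzf
    have hnorm {U : H →L[ℂ] H} (hU : star U * U = R) : ‖U ξ‖ = ‖ξ‖ :=
      (norm_apply_eq_of_star_mul_self_eq (b := R) (by rw [hU, hR.star_eq, hR.mul_self]) ξ).trans
        (congrArg norm hRξ)
    rw [hnorm hVV, hnorm (U := star V) (by rwa [star_star])] at hVξ
    exact absurd (norm_pos_iff.2 hη₀) (by linarith)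

end VectorDomination

theorem hasSum_prod_of_nonneg {α β : Type*} {f : α × β → ℝ} {g : α → ℝ} {s : ℝ} (hf : ∀ i, 0 ≤ f i)
    (hfg : ∀ a, HasSum (fun b => f (a, b)) (g a)) (hg : HasSum g s) : HasSum f s := by
  have hf_summable : Summable f := by
    refine (summable_prod_of_nonneg hf).2 ⟨fun a => (hfg a).summable, ?_⟩
    simpa only [(hfg _).tsum_eq] using hg.summable
  exact (hf_summable.hasSum.prod_fiberwise hfg).unique hg ▸ hf_summable.hasSum

section ScalesNormSq

variable {E : Type*} [NormedAddCommGroup E] [NormedSpace ℂ E] {ι κ : Type*} {p : E →L[ℂ] E}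
  {x : ι → E →L[ℂ] E} {y : κ → E →L[ℂ] E} {c d : ℝ}

/-- The family `x` satisfies `∑ x* x = c p` for a projection `p`, expressed by the quadratic forms
of both sides, so that only sums of nonnegative reals occur. -/
def ScalesNormSq (p : E →L[ℂ] E) (c : ℝ) (x : ι → E →L[ℂ] E) : Prop :=
  ∀ ξ, HasSum (fun i => ‖x i ξ‖ ^ 2) (c * ‖p ξ‖ ^ 2)

namespace ScalesNormSq

theorem comp_equiv (hx : ScalesNormSq p c x) (e : κ ≃ ι) : ScalesNormSq p c fun j => x (e j) :=
  fun ξ => e.hasSum_iff.2 (hx ξ)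

theorem mul (hx : ScalesNormSq p c x) (hy : ScalesNormSq p d y) (hpx : ∀ i, p * x i = x i) :
    ScalesNormSq p (c * d) fun ij : ι × κ => y ij.2 * x ij.1 := by
  intro ξ
  refine hasSum_prod_of_nonneg (g := fun i => d * ‖x i ξ‖ ^ 2) (fun _ => sq_nonneg _)
    (fun i => ?_) ?_
  · simpa only [← mul_apply_eq_comp, hpx] using hy (x i ξ)
  · rw [mul_comm c, mul_assoc]
    exact (hx ξ).mul_left d

theorem of_norm_sq_eq {z : ι × κ → E →L[ℂ] E} {a : ι → κ → ℝ} (hx : ScalesNormSq p 1 x)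
    (ha : ∀ i, HasSum (a i) c) (hz : ∀ i j ξ, ‖z (i, j) ξ‖ ^ 2 = a i j * ‖x i ξ‖ ^ 2) :
    ScalesNormSq p c z := by
  intro ξ
  refine hasSum_prod_of_nonneg (g := fun i => c * ‖x i ξ‖ ^ 2) (fun _ => sq_nonneg _)
    (fun i => ?_) ?_
  · simpa only [hz] using (ha i).mul_right (‖x i ξ‖ ^ 2)
  · simpa only [one_mul] using (hx ξ).mul_left c

theorem sum_apply {α : Type*} [Fintype α] (hx : ScalesNormSq p c x) (ξ : α → E) :
    HasSum (fun i => ∑ a, ‖x i (ξ a)‖ ^ 2) (c * ∑ a, ‖p (ξ a)‖ ^ 2) := by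
  rw [Finset.mul_sum]
  exact hasSum_sum fun a _ => hx (ξ a)

end ScalesNormSq

end ScalesNormSq

section KadisonPedersen

variable {M : VonNeumannAlgebra H} {h k p : H →L[ℂ] H} {c d : ℝ}

theorem kpEquiv_iff_exists_hasStrongSum : KPEquiv M h k ↔
    ∃ (ι : Type u) (x : ι → H →L[ℂ] H), (∀ i, x i ∈ M) ∧
      HasStrongSum (fun i => star (x i) * x i) h ∧ HasStrongSum (fun i => x i * star (x i)) k := by
  simp only [KPEquiv, HasStrongSum, star_eq_adjoint]

namespace KPEquiv

theorem symm (hkp : KPEquiv M h k) : KPEquiv M k h := by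
  rw [kpEquiv_iff_exists_hasStrongSum] at hkp ⊢
  obtain ⟨ι, x, hxM, hx, hx_star⟩ := hkp
  exact ⟨ι, fun i => star (x i), fun i => star_mem (hxM i), by simpa only [star_star] using hx_star,
    by simpa only [star_star] using hx⟩

theorem central_mul {z : H →L[ℂ] H} (hz : IsCentralProj M z) (hkp : KPEquiv M h k) :
    KPEquiv M (z * h) (z * k) := by
  rw [kpEquiv_iff_exists_hasStrongSum] at hkp ⊢
  obtain ⟨ι, x, hxM, hx, hx_star⟩ := hkp
  refine ⟨ι, fun i => z * x i, fun i => mul_mem hz.1.1 (hxM i), ?_, ?_⟩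
  · simpa only [hz.star_mul_eq (hxM _), hz.mul_mul_mul (star_mem (hxM _))] using hx.mul_left z
  · simpa only [hz.star_mul_eq (hxM _), hz.mul_mul_mul (hxM _)] using hx_star.mul_left z

theorem smul {r : ℝ} (hr : 0 ≤ r) (hkp : KPEquiv M h k) :
    KPEquiv M ((r : ℂ) • h) ((r : ℂ) • k) := by
  rw [kpEquiv_iff_exists_hasStrongSum] at hkp ⊢
  obtain ⟨ι, x, hxM, hx, hx_star⟩ := hkp
  have hsq : (√r : ℂ) * √r = r := by exact_mod_cast Real.mul_self_sqrt hr
  have hstar (i : ι) : star ((√r : ℂ) • x i) = (√r : ℂ) • star (x i) := by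
    rw [star_smul, RCLike.star_def, Complex.conj_ofReal]
  refine ⟨ι, fun i => (√r : ℂ) • x i, fun i => smul_mem_vonNeumannAlgebra _ (hxM i), ?_, ?_⟩
  · simpa only [hstar, smul_mul_smul_comm, hsq, HasStrongSum, smul_apply]
      using fun ξ => (hx ξ).const_smul (r : ℂ)
  · simpa only [hstar, smul_mul_smul_comm, hsq, HasStrongSum, smul_apply]
      using fun ξ => (hx_star ξ).const_smul (r : ℂ)

theorem inv_smul (hc : 0 < c) (hkp : KPEquiv M p ((c : ℂ) • p)) :
    KPEquiv M p (((c⁻¹ : ℝ) : ℂ) • p) := by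
  have hkp' := (hkp.smul (inv_nonneg.2 hc.le)).symm
  rwa [smul_smul, ← Complex.ofReal_mul, inv_mul_cancel₀ hc.ne', Complex.ofReal_one, one_smul]
    at hkp'

end KPEquiv

namespace ScalesNormSq

variable {ι : Type*} {x : ι → H →L[ℂ] H}

theorem right (hx : ScalesNormSq p c x) (hp : IsProjIn M p) (i : ι) : x i * p = x i := by
  ext ξ
  have hpξ : p (ξ - p ξ) = 0 := by
    rw [map_sub, ← mul_apply_eq_comp, hp.mul_self, sub_self]
  have hle := le_hasSum (hx (ξ - p ξ)) i fun j _ => sq_nonneg _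
  rw [hpξ, norm_zero, zero_pow two_ne_zero, mul_zero] at hle
  rw [mul_apply_eq_comp, eq_comm, ← sub_eq_zero, ← map_sub, ← norm_eq_zero]
  exact pow_eq_zero_iff two_ne_zero |>.1 (hle.antisymm (sq_nonneg _))

theorem mul_star_eq (hx : ScalesNormSq p c x) (hp : IsProjIn M p) (i : ι) :
    p * star (x i) = star (x i) := by
  simpa [hp.star_eq] using congrArg star (hx.right hp i)

end ScalesNormSq

theorem hasStrongSum_star_mul_self_iff_scalesNormSq {ι : Type*} {x : ι → H →L[ℂ] H}
    (hp : IsProjIn M p) :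
    HasStrongSum (fun i => star (x i) * x i) ((c : ℂ) • p) ↔ ScalesNormSq p c x := by
  have hre (ξ : H) : RCLike.re (inner ℂ (((c : ℂ) • p) ξ) ξ) = c * ‖p ξ‖ ^ 2 := by
    rw [norm_sq_apply_eq_re_inner, hp.star_eq, hp.mul_self, smul_apply, inner_smul_left,
      Complex.conj_ofReal]
    exact RCLike.re_ofReal_mul c _
  have hcp : IsSelfAdjoint ((c : ℂ) • p) :=
    .smul (show IsSelfAdjoint (c : ℂ) from Complex.conj_ofReal c) hp.2.1
  refine ⟨fun h ξ => hre ξ ▸ h.hasSum_re_inner ξ, fun h => ?_⟩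
  exact hasStrongSum_star_mul_self_of_hasSum hcp fun ξ => (hre ξ).symm ▸ h ξ

theorem kpEquiv_smul_iff_exists_scalesNormSq (hp : IsProjIn M p) :
    KPEquiv M p ((c : ℂ) • p) ↔ ∃ (ι : Type u) (x : ι → H →L[ℂ] H), (∀ i, x i ∈ M) ∧
      ScalesNormSq p 1 x ∧ ScalesNormSq p c fun i => star (x i) := by
  simp only [kpEquiv_iff_exists_hasStrongSum, ← hasStrongSum_star_mul_self_iff_scalesNormSq hp,
    star_star, Complex.ofReal_one, one_smul]

namespace KPEquiv

theorem mul_smul (hp : IsProjIn M p) (hc : KPEquiv M p ((c : ℂ) • p))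
    (hd : KPEquiv M p ((d : ℂ) • p)) : KPEquiv M p (((c * d : ℝ) : ℂ) • p) := by
  rw [kpEquiv_smul_iff_exists_scalesNormSq hp] at hc hd ⊢
  obtain ⟨ι, x, hxM, hx, hx_star⟩ := hc
  obtain ⟨κ, y, hyM, hy, hy_star⟩ := hd
  have hpx (i : ι) : p * x i = x i := by simpa only [star_star] using hx_star.mul_star_eq hp i
  refine ⟨ι × κ, fun ij => y ij.2 * x ij.1, fun ij => mul_mem (hyM _) (hxM _),
    one_mul (1 : ℝ) ▸ hx.mul hy hpx, ?_⟩
  rw [mul_comm c]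
  simpa only [Equiv.prodComm_apply, Prod.fst_swap, Prod.snd_swap, star_mul] using
    (hy_star.mul hx_star (hy.mul_star_eq hp)).comp_equiv (Equiv.prodComm ι κ)

theorem pow_smul (hp : IsProjIn M p) (hc : KPEquiv M p ((c : ℂ) • p)) (n : ℕ) :
    KPEquiv M p (((c ^ (n + 1) : ℝ) : ℂ) • p) := by
  induction n with
  | zero => simpa only [zero_add, pow_one] using hc
  | succ n ih => rw [pow_succ]; exact ih.mul_smul hp hc

theorem sum_norm_sq_apply_le {α β : Type*} [Fintype α] [Fintype β] {ξ : α → H} {η : β → H}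
    (hp : IsProjIn M p) (hc : KPEquiv M p ((c : ℂ) • p))
    (h : ∀ y, IsInCorner M p p y → ∑ a, ‖y (ξ a)‖ ^ 2 ≤ ∑ b, ‖star y (η b)‖ ^ 2) :
    ∑ a, ‖p (ξ a)‖ ^ 2 ≤ c * ∑ b, ‖p (η b)‖ ^ 2 := by
  obtain ⟨ι, x, hxM, hx, hx_star⟩ := (kpEquiv_smul_iff_exists_scalesNormSq hp).1 hc
  have hpx (i : ι) : p * x i = x i := by simpa only [star_star] using hx_star.mul_star_eq hp i
  simpa only [one_mul] using hasSum_le (fun i => h (x i) ⟨hxM i, hpx i, hx.right hp i⟩)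
    (hx.sum_apply ξ) (hx_star.sum_apply η)

theorem apply_eq_zero_of_lt_one {α β : Type*} [Fintype α] [Fintype β] {ξ : α → H}
    {η : β → H} (hp : IsProjIn M p) (hc0 : 0 < c) (hc1 : c < 1) (hc : KPEquiv M p ((c : ℂ) • p))
    (h : ∀ y, IsInCorner M p p y → ∑ a, ‖y (ξ a)‖ ^ 2 ≤ ∑ b, ‖star y (η b)‖ ^ 2) (a : α) :
    p (ξ a) = 0 := by
  have hlim : Tendsto (fun n => c ^ (n + 1) * ∑ b, ‖p (η b)‖ ^ 2) atTop (𝓝 0) := by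
    simpa only [zero_mul, Function.comp_def] using
      ((tendsto_pow_atTop_nhds_zero_of_lt_one hc0.le hc1).comp (tendsto_add_atTop_nat 1)).mul_const
        (∑ b, ‖p (η b)‖ ^ 2)
  have hsum : ∑ a, ‖p (ξ a)‖ ^ 2 ≤ 0 :=
    ge_of_tendsto' hlim fun n => (hc.pow_smul hp n).sum_norm_sq_apply_le hp h
  have hle := (Finset.single_le_sum (fun a _ => sq_nonneg ‖p (ξ a)‖) (Finset.mem_univ a)).trans hsum
  exact norm_eq_zero.1 (pow_eq_zero_iff two_ne_zero |>.1 (hle.antisymm (sq_nonneg _)))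

theorem apply_eq_zero {α β : Type*} [Fintype α] [Fintype β] {ξ : α → H}
    {η : β → H} (hp : IsProjIn M p) (hc0 : 0 < c) (hc1 : c ≠ 1) (hc : KPEquiv M p ((c : ℂ) • p))
    (h : ∀ y, IsInCorner M p p y → ∑ a, ‖y (ξ a)‖ ^ 2 ≤ ∑ b, ‖star y (η b)‖ ^ 2) (a : α) :
    p (ξ a) = 0 := by
  rcases hc1.lt_or_gt with hlt | hgt
  · exact hc.apply_eq_zero_of_lt_one hp hc0 hlt h a
  · exact (hc.inv_smul hc0).apply_eq_zero_of_lt_one hp (inv_pos.2 hc0)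
      (inv_lt_one_of_one_lt₀ hgt) h a

end KPEquiv

end KadisonPedersen

section Finite

variable {M : VonNeumannAlgebra H} {e p : H →L[ℂ] H}

namespace IsSplitting

variable {ι : Type*} {a : ι ⊕ Unit → H →L[ℂ] H}

theorem sum_norm_sq_apply [Fintype ι] (ha : IsSplitting M e p a) (hp : IsProjIn M p)
    {y : H →L[ℂ] H} (hy : p * y = y) (ζ : H) : ∑ i, ‖a i (y ζ)‖ ^ 2 = ‖y ζ‖ ^ 2 := by
  have hsum := HasStrongSum.hasSum_norm_sq (V := p)
    (by simpa only [hp.star_eq, hp.mul_self] using ha.hasStrongSum) (y ζ)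
  rw [← mul_apply_eq_comp, hy] at hsum
  exact (hasSum_fintype _).unique hsum

theorem isInCorner_mul_mul_star {f y : H →L[ℂ] H} (ha : IsSplitting M e p a)
    (hf : IsProjIn M f) (hfe : f * e = e) (hy : y ∈ M) (i j : ι ⊕ Unit) :
    IsInCorner M f f (a i * (y * star (a j))) := by
  have hleft (i : ι ⊕ Unit) : f * a i = a i := by rw [← ha.left i, ← mul_assoc, hfe]
  have hright : star (a j) * f = star (a j) := by
    simpa [hf.star_eq] using congrArg star (hleft j)
  exact ⟨mul_mem (ha.mem i) (mul_mem hy (star_mem (ha.mem j))), by rw [← mul_assoc, hleft],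
    by rw [mul_assoc, mul_assoc, hright]⟩

theorem sum_norm_sq_apply_star_le [Fintype ι] {f y : H →L[ℂ] H} {ξ η : H}
    (ha : IsSplitting M e p a) (hp : IsProjIn M p) (hf : IsProjIn M f)
    (hfe : f * e = e) (h : ∀ y, IsInCorner M f f y → ‖y ξ‖ ≤ ‖star y η‖)
    (hy : IsInCorner M p p y) :
    ∑ j, ‖y (star (a j) ξ)‖ ^ 2 ≤ ∑ i, ‖star y (star (a i) η)‖ ^ 2 := by
  have hterm (i j : ι ⊕ Unit) : ‖a i (y (star (a j) ξ))‖ ≤ ‖a j (star y (star (a i) η))‖ := by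
    simpa [mul_assoc] using h _ (ha.isInCorner_mul_mul_star hf hfe hy.mem i j)
  calc ∑ j, ‖y (star (a j) ξ)‖ ^ 2
      = ∑ j, ∑ i, ‖a i (y (star (a j) ξ))‖ ^ 2 := by
        simp only [ha.sum_norm_sq_apply hp hy.left]
    _ ≤ ∑ j, ∑ i, ‖a j (star y (star (a i) η))‖ ^ 2 := by
        gcongr with j _ i _; exact hterm i j
    _ = ∑ i, ‖star y (star (a i) η)‖ ^ 2 := by
        rw [Finset.sum_comm]
        simp only [ha.sum_norm_sq_apply hp (hy.star hp hp).left]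

end IsSplitting

theorem HasFiniteCopies.not_kpEquiv_smul {c : ℝ} (h : HasFiniteCopies M p) (hp : IsProjIn M p)
    (h0 : p ≠ 0) (hc0 : 0 < c) (hc1 : c ≠ 1) : ¬KPEquiv M p ((c : ℂ) • p) := by
  intro hc
  obtain ⟨e, ξ, η, he, he0, hpe, he_min, hdom⟩ := h.exists_norm_apply_le_norm_star_apply hp h0
  obtain ⟨z, hz, hze, ι, _, ⟨i⟩, a, ha⟩ := h.exists_isSplitting hp he he0 hpe
  have := Fintype.ofFinite ι
  have hzp := hz.isProjIn_mul hp
  have hzc : KPEquiv M (z * p) ((c : ℂ) • (z * p)) := by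
    simpa only [mul_smul_comm] using hc.central_mul hz
  have hzero : (z * p) (star (a (.inl i)) ξ) = 0 :=
    hzc.apply_eq_zero (ξ := fun j => star (a j) ξ) (η := fun j => star (a j) η) hzp hc0 hc1
      (fun y hy => ha.sum_norm_sq_apply_star_le hzp he
        (by rw [hz.2 e he.1, ← mul_assoc, he.mul_self]) hdom hy) (.inl i)
  have hzeξ : (z * e) ξ = 0 := by
    rw [← ha.mul_star_self i, mul_apply_eq_comp, ← ha.mul_star_eq, mul_apply_eq_comp, hzero,
      map_zero]
  have hzee := he_min (z * e) (hz.isProjIn_mul he).1 hzeξ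
  rw [mul_assoc, he.mul_self] at hzee
  exact hze hzee

theorem isParadoxical_of_kpEquiv_smul {c : ℝ} (hp : IsProjIn M p) (hc0 : 0 < c) (hc1 : c ≠ 1)
    (hc : KPEquiv M p ((c : ℂ) • p)) : IsParadoxical M p := by
  refine .of_forall_isCentralProj hp fun z hz hz0 => ?_
  rcases eq_or_ne (z * p) 0 with hzp0 | hzp0
  · exact ⟨z, hz, hz0, hz.1.mul_self, hzp0 ▸ .zero⟩
  have hzp := hz.isProjIn_mul hp
  have hzc : KPEquiv M (z * p) ((c : ℂ) • (z * p)) := by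
    simpa only [mul_smul_comm] using hc.central_mul hz
  obtain ⟨w, hw, hwp0, hwp⟩ := exists_isParadoxical_of_not_hasFiniteCopies hzp
    fun hfin => hfin.not_kpEquiv_smul hzp hzp0 hc0 hc1 hzc
  refine ⟨w * z, hw.mul hz, fun hwz => hwp0 ?_, ?_, ?_⟩
  · rw [← mul_assoc, hwz, zero_mul]
  · rw [hz.2 _ (mul_mem hw.1.1 hz.1.1), mul_assoc, hz.1.mul_self]
  · rwa [mul_assoc]

end Finite

section InfiniteToScaling

open MeasureTheory Set

theorem hasSum_measureReal_inter_preimage_singleton {α : Type*} [MeasurableSpace α] {μ : Measure α}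
    {s : Set α} (hs : μ s ≠ ⊤) {f : α → ℕ} (hf : Measurable f) :
    HasSum (fun n => μ.real (s ∩ f ⁻¹' {n})) (μ.real s) := by
  have htsum : ∑' n, μ (s ∩ f ⁻¹' {n}) = μ s := by
    have hfiber := tsum_measure_preimage_singleton (μ := μ.restrict s) countable_univ
      fun n _ => hf (measurableSet_singleton n)
    rw [tsum_univ fun n => μ.restrict s (f ⁻¹' {n}), preimage_univ,
      Measure.restrict_apply_univ] at hfiber
    simpa only [Measure.restrict_apply (hf (measurableSet_singleton _)), inter_comm] using hfiber
  have hsum := ENNReal.hasSum_toReal (htsum.symm ▸ hs)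
  rwa [← ENNReal.tsum_toReal_eq fun n => measure_ne_top_of_subset inter_subset_left hs, htsum]
    at hsum

theorem Ici_inter_preimage_floor_div_singleton {c : ℝ} (hc : 0 < c) (n : ℕ) :
    Ici 0 ∩ (fun t : ℝ => ⌊t / c⌋₊) ⁻¹' {n} = Ico (c * n) (c * (n + 1)) := by
  ext t
  have hfloor (ht : 0 ≤ t) : ⌊t / c⌋₊ = n ↔ t ∈ Ico (c * n) (c * (n + 1)) := by
    rw [Nat.floor_eq_iff (div_nonneg ht hc.le), le_div_iff₀' hc, div_lt_iff₀' hc, mem_Ico]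
  exact ⟨fun ⟨ht, hn⟩ => (hfloor ht).1 hn, fun hn =>
    have ht : 0 ≤ t := le_trans (by positivity) hn.1
    ⟨ht, (hfloor ht).2 hn⟩⟩

-- The entries are the lengths of `[n, n + 1) ∩ [c m, c (m + 1))`.
theorem exists_hasSum_row_one_hasSum_column {c : ℝ} (hc : 0 < c) :
    ∃ a : ℕ → ℕ → ℝ, (∀ n m, 0 ≤ a n m) ∧ (∀ n, HasSum (a n) 1) ∧
      ∀ m, HasSum (fun n => a n m) c := by
  let s (d : ℝ) (n : ℕ) : Set ℝ := (fun t => ⌊t / d⌋₊) ⁻¹' {n}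
  have hs {d : ℝ} (hd : 0 < d) (n : ℕ) : volume.real (Ici 0 ∩ s d n) = d := by
    rw [Ici_inter_preimage_floor_div_singleton hd, Real.volume_real_Ico_of_le (by nlinarith)]
    ring
  have hs_top {d : ℝ} (hd : 0 < d) (n : ℕ) : volume (Ici 0 ∩ s d n) ≠ ⊤ := by
    rw [Ici_inter_preimage_floor_div_singleton hd]
    exact measure_Ico_lt_top.ne
  have hmeas (d : ℝ) : Measurable fun t : ℝ => ⌊t / d⌋₊ := by fun_prop
  refine ⟨fun n m => volume.real (Ici 0 ∩ s 1 n ∩ s c m), fun n m => measureReal_nonneg,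
    fun n => ?_, fun m => ?_⟩
  · simpa only [hs one_pos] using
      hasSum_measureReal_inter_preimage_singleton (hs_top one_pos n) (hmeas c)
  · simpa only [hs hc, inter_right_comm] using
      hasSum_measureReal_inter_preimage_singleton (hs_top hc m) (hmeas 1)

variable {M : VonNeumannAlgebra H} {p : H →L[ℂ] H}

theorem HasStrongSum.scalesNormSq {e : ℕ → H →L[ℂ] H} (he : ∀ n, IsProjIn M (e n))
    (hp : IsProjIn M p) (hsum : HasStrongSum e p) : ScalesNormSq p 1 e := by
  rw [← hasStrongSum_star_mul_self_iff_scalesNormSq hp, Complex.ofReal_one, one_smul]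
  simpa only [(he _).star_eq, (he _).mul_self] using hsum

theorem ProperlyInfiniteProj.exists_isCopy (h : ProperlyInfiniteProj M p) :
    ∃ e v : ℕ → H →L[ℂ] H, (∀ n, IsProjIn M (e n)) ∧ HasStrongSum e p ∧
      (∀ n, IsCopy M (e n) p (v n)) ∧ ∀ n, v n * star (v n) = p := by
  obtain ⟨-, e, he, -, hv, hsum⟩ := h
  simp only [MvNEquiv, ← star_eq_adjoint] at hv
  choose v hvM hv_init hv_final using hv
  exact ⟨e, v, he, hsum, fun n =>
    ⟨hvM n, hv_init n, hv_final n ▸ IsPartialIsometry.of_isProjIn (he n) (hv_init n)⟩, hv_final⟩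

theorem IsCopy.norm_star_mul_apply {e v w : H →L[ℂ] H} (hv : IsCopy M e p v) (he : IsProjIn M e)
    (hw : w * star w = p) (ξ : H) : ‖(star w * v) ξ‖ = ‖e ξ‖ :=
  norm_apply_eq_of_star_mul_self_eq (by
    rw [star_mul, star_star, mul_assoc, ← mul_assoc w, hw, hv.left, hv.star_mul_self, he.star_eq,
      he.mul_self]) ξ

theorem ProperlyInfiniteProj.kpEquiv_smul (h : ProperlyInfiniteProj M p) (hp : IsProjIn M p)
    {c : ℝ} (hc : 0 < c) : KPEquiv M p ((c : ℂ) • p) := by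
  obtain ⟨e, v, he, hsum, hv, hv_final⟩ := h.exists_isCopy
  obtain ⟨a, ha0, ha_row, ha_column⟩ := exists_hasSum_row_one_hasSum_column hc
  let x (nm : ℕ × ℕ) : H →L[ℂ] H := (√(a nm.1 nm.2) : ℂ) • (star (v nm.2) * v nm.1)
  have hx_norm (r : ℝ) (hr : 0 ≤ r) (n m : ℕ) (ξ : H) :
      ‖((√r : ℂ) • (star (v m) * v n)) ξ‖ ^ 2 = r * ‖e n ξ‖ ^ 2 := by
    rw [smul_apply, norm_smul, (hv n).norm_star_mul_apply (he n) (hv_final m), mul_pow,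
      Complex.norm_of_nonneg (Real.sqrt_nonneg r), Real.sq_sqrt hr]
  have hx_star (n m : ℕ) : star (x (m, n)) = (√(a m n) : ℂ) • (star (v m) * v n) := by
    simp [x]
  have hsq := hsum.scalesNormSq he hp
  have hx : ScalesNormSq p 1 x := hsq.of_norm_sq_eq ha_row fun n m => hx_norm _ (ha0 n m) n m
  have hx_swap : ScalesNormSq p c fun nm : ℕ × ℕ => star (x nm.swap) :=
    hsq.of_norm_sq_eq ha_column fun n m ξ => by
      rw [Prod.swap_prod_mk, hx_star, hx_norm _ (ha0 m n)]
  rw [kpEquiv_smul_iff_exists_scalesNormSq hp]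
  refine ⟨ULift (ℕ × ℕ), fun nm => x nm.down, fun nm => ?_, hx.comp_equiv Equiv.ulift,
    hx_swap.comp_equiv (Equiv.ulift.trans (Equiv.prodComm ℕ ℕ))⟩
  exact smul_mem_vonNeumannAlgebra _ (mul_mem (star_mem (hv _).mem) (hv _).mem)

end InfiniteToScaling

/-- A nonzero projection `p` is properly infinite iff `p ≈ λ p` for some
(equivalently, every) `λ ∈ (0,1) ∪ (1,∞)`. -/
theorem properlyInfinite_iff_kpEquiv_smul (M : VonNeumannAlgebra H)
    (p : H →L[ℂ] H) (hp : IsProjIn M p) (hne : p ≠ 0) :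
    (ProperlyInfiniteProj M p ↔
      ∀ c : ℝ, 0 < c → c ≠ 1 → KPEquiv M p ((c : ℂ) • p)) ∧
    (ProperlyInfiniteProj M p ↔
      ∃ c : ℝ, 0 < c ∧ c ≠ 1 ∧ KPEquiv M p ((c : ℂ) • p)) := by
  have of_kpEquiv : (∃ c : ℝ, 0 < c ∧ c ≠ 1 ∧ KPEquiv M p ((c : ℂ) • p)) →
      ProperlyInfiniteProj M p := by
    rintro ⟨c, hc0, hc1, hc⟩
    exact (isParadoxical_of_kpEquiv_smul hp hc0 hc1 hc).properlyInfiniteProj hp hne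
  refine ⟨⟨fun h c hc _ => h.kpEquiv_smul hp hc, fun h => ?_⟩, ⟨fun h => ?_, of_kpEquiv⟩⟩
  · exact of_kpEquiv ⟨2, two_pos, OfNat.ofNat_ne_one 2, h 2 two_pos (OfNat.ofNat_ne_one 2)⟩
  · exact ⟨2, two_pos, OfNat.ofNat_ne_one 2, h.kpEquiv_smul hp two_pos⟩
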